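/- arXiv:1701.08949 — 2 statements merged into one kernel-verified Lean document; each statement's English description precedes it below -/
import Mathlib

section
/- Let A be an algebra possessing a Mal'cev term and suppose (α,β) is an n-supernilpotent interval in the congruence lattice of A. Then for every covering pair γ ≺ σ with α ≤ γ ≺ σ ≤ β, the interval (γ,σ) is abelian, i.e., C(σ,σ;γ) holds in A. -/
set_option autoImplicit false

namespace UA

/-- A signature: a type of operation symbols, each with a finite arity. -/
structure Signature : Type 1 where
  ops : Type
  arity : ops → ℕ

/-- An algebra for a signature: a carrier set together with an interpretation
of every operation symbol. -/
structure Algebra (σ : Signature) : Type 1 where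
  carrier : Type
  interp : (o : σ.ops) → (Fin (σ.arity o) → carrier) → carrier

variable {σ : Signature}

/-- A congruence of an algebra: an equivalence relation compatible with all
basic operations. -/
structure Con (A : Algebra σ) : Type where
  r : A.carrier → A.carrier → Prop
  refl : ∀ a, r a a
  symm : ∀ {a b}, r a b → r b a
  trans : ∀ {a b c}, r a b → r b c → r a c
  compat : ∀ (o : σ.ops) (x y : Fin (σ.arity o) → A.carrier),
      (∀ i, r (x i) (y i)) → r (A.interp o x) (A.interp o y)

namespace Con

variable {A : Algebra σ}

instance : LE (Con A) := ⟨fun c d => ∀ a b : A.carrier, c.r a b → d.r a b⟩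
instance : LT (Con A) := ⟨fun c d => c ≤ d ∧ ¬ d ≤ c⟩

/-- The total congruence `1_A`. -/
def top : Con A where
  r := fun _ _ => True
  refl := fun _ => trivial
  symm := fun _ => trivial
  trans := fun _ _ => trivial
  compat := fun _ _ _ _ => trivial

/-- The identity congruence `0_A`. -/
def bot : Con A where
  r := fun a b => a = b
  refl := fun _ => rfl
  symm := fun h => h.symm
  trans := fun h h' => h.trans h'
  compat := fun o _ _ h => congrArg (A.interp o) (funext h)

/-- Meet of an arbitrary family of congruences (intersection). -/
def sInf (S : Set (Con A)) : Con A where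
  r a b := ∀ c ∈ S, c.r a b
  refl a c _ := c.refl a
  symm h c hc := c.symm (h c hc)
  trans h h' c hc := c.trans (h c hc) (h' c hc)
  compat o x y h c hc := c.compat o x y (fun i => h i c hc)

/-- Binary meet of congruences. -/
def inf (c d : Con A) : Con A where
  r a b := c.r a b ∧ d.r a b
  refl a := ⟨c.refl a, d.refl a⟩
  symm h := ⟨c.symm h.1, d.symm h.2⟩
  trans h h' := ⟨c.trans h.1 h'.1, d.trans h.2 h'.2⟩
  compat o x y h := ⟨c.compat o x y fun i => (h i).1, d.compat o x y fun i => (h i).2⟩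

/-- The congruence generated by a set of pairs. -/
def conGen (S : Set (A.carrier × A.carrier)) : Con A :=
  sInf {c : Con A | ∀ p ∈ S, c.r p.1 p.2}

/-- Binary join of congruences. -/
def sup (c d : Con A) : Con A := conGen {p | c.r p.1 p.2 ∨ d.r p.1 p.2}

/-- Join of a family of congruences. -/
def iSup {I : Type} (f : I → Con A) : Con A := conGen {p | ∃ i, (f i).r p.1 p.2}

/-- Composition of congruences as binary relations. -/
def comp (c d : Con A) (a b : A.carrier) : Prop := ∃ x, c.r a x ∧ d.r x b

/-- `d` covers `c` in the congruence lattice. -/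
def Covers (c d : Con A) : Prop := c < d ∧ ∀ e : Con A, c < e → e ≤ d → e = d

theorem le_sup_right {c d : Con A} : d ≤ sup c d :=
  fun a b h e he => he (a, b) (Or.inr h)

def toSetoid (c : Con A) : Setoid A.carrier := ⟨c.r, ⟨c.refl, c.symm, c.trans⟩⟩

end Con

/-- The quotient algebra `A/γ`. -/
noncomputable def quotAlg (A : Algebra σ) (γ : Con A) : Algebra σ where
  carrier := Quotient γ.toSetoid
  interp o x := Quotient.mk γ.toSetoid (A.interp o (fun i => (x i).out))

/-- The quotient congruence `α/γ` for `γ ≤ α`. -/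
noncomputable def Con.quot {A : Algebra σ} (α γ : Con A) (h : γ ≤ α) : Con (quotAlg A γ) where
  r x y := Quotient.liftOn₂ x y (fun a b => α.r a b)
    (fun a b a' b' ha hb => propext
      ⟨fun hr => α.trans (α.symm (h _ _ ha)) (α.trans hr (h _ _ hb)),
       fun hr => α.trans (h _ _ ha) (α.trans hr (α.symm (h _ _ hb)))⟩)
  refl x := Quotient.inductionOn x fun a => α.refl a
  symm {x y} h' := Quotient.inductionOn₂ x y (fun _ _ hab => α.symm hab) h'
  trans {x y z} h1 h2 :=
    Quotient.inductionOn₃ x y z (fun _ _ _ hab hbc => α.trans hab hbc) h1 h2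
  compat o x y hxy := by
    show α.r (A.interp o fun i => (x i).out) (A.interp o fun i => (y i).out)
    refine α.compat o _ _ fun i => ?_
    have h1 := hxy i
    rw [← Quotient.out_eq (x i), ← Quotient.out_eq (y i)] at h1
    exact h1

/-- The polynomial operations of an algebra: the clone generated by the basic
operations, the projections and the constants. -/
inductive IsPolynomial (A : Algebra σ) : {n : ℕ} → ((Fin n → A.carrier) → A.carrier) → Prop
  | proj {n : ℕ} (i : Fin n) : IsPolynomial A (fun x => x i)
  | const {n : ℕ} (a : A.carrier) : IsPolynomial A (fun _ : Fin n → A.carrier => a)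
  | app {n : ℕ} (o : σ.ops) (g : Fin (σ.arity o) → (Fin n → A.carrier) → A.carrier) :
      (∀ j, IsPolynomial A (g j)) → IsPolynomial A (fun x => A.interp o (fun j => g j x))

/-- Substituting, coordinatewise according to the grouping `g` and the choice
vector `ε`, the entries of `b` (where `ε` is `true`) or of `a` (where `ε` is `false`). -/
def chooseVec {β : Type} {N n : ℕ} (g : Fin N → Fin n) (a b : Fin N → β)
    (ε : Fin n → Bool) : Fin N → β :=
  fun i => if ε (g i) then b i else a i

/-- The higher centralizer relation `C(α₁,…,αₙ,β;δ)` of Bulatov.  Polynomials with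
grouped variables are modelled by a polynomial `p` of arity `N` together with a
grouping map `g : Fin N → Fin (n+1)`; the group `Fin.last n` is the `β`-group. -/
def Centralizes {A : Algebra σ} {n : ℕ} (α : Fin n → Con A) (β δ : Con A) : Prop :=
  ∀ (N : ℕ) (p : (Fin N → A.carrier) → A.carrier), IsPolynomial A p →
    ∀ (g : Fin N → Fin (n + 1)) (a b : Fin N → A.carrier),
      (∀ i, (Fin.lastCases (motive := fun _ => Con A) β α (g i)).r (a i) (b i)) →
      (∀ ε : Fin n → Bool, ε ≠ (fun _ => true) →
        δ.r (p (chooseVec g a b (Fin.lastCases (motive := fun _ => Bool) false ε)))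
            (p (chooseVec g a b (Fin.lastCases (motive := fun _ => Bool) true ε)))) →
      δ.r (p (chooseVec g a b (Fin.lastCases (motive := fun _ => Bool) false fun _ => true)))
          (p (chooseVec g a b (Fin.lastCases (motive := fun _ => Bool) true fun _ => true)))

/-- The higher commutator `[α₁,…,αₙ,β]`: the smallest congruence `δ` such that
`C(α₁,…,αₙ,β;δ)` holds. -/
def commutator {A : Algebra σ} {n : ℕ} (α : Fin n → Con A) (β : Con A) : Con A :=
  Con.sInf {δ : Con A | Centralizes α β δ}

/-- The higher commutator of a nonempty list of congruences, with the convention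
`[α] = α` for a single congruence. -/
def commList {A : Algebra σ} : {n : ℕ} → (Fin (n + 1) → Con A) → Con A
  | 0, γ => γ 0
  | (n+1), γ => commutator (fun j : Fin (n+1) => γ j.castSucc) (γ (Fin.last (n+1)))

/-- The `m`-fold commutator `[θ,…,θ]_m` (for `m ≥ 1`). -/
def nfold {A : Algebra σ} (θ : Con A) (m : ℕ) : Con A :=
  commList (fun _ : Fin (m - 1 + 1) => θ)

/-- The binary commutator `[c,d]`. -/
def binComm {A : Algebra σ} (c d : Con A) : Con A := commutator (fun _ : Fin 1 => c) d

/-- The lower central series `(θ]ⁿ`. -/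
def lcs {A : Algebra σ} (θ : Con A) : ℕ → Con A
  | 0 => θ
  | (k+1) => binComm θ (lcs θ k)

/-- The derived series `[θ]ⁿ`. -/
def derived {A : Algebra σ} (θ : Con A) : ℕ → Con A
  | 0 => θ
  | (k+1) => binComm (derived θ k) (derived θ k)

/-- An algebra is nilpotent if some term of the lower central series of `1_A` is `0_A`. -/
def Nilpotent (A : Algebra σ) : Prop := ∃ m, lcs (Con.top : Con A) m = Con.bot

/-- An algebra is nilpotent of class `n` if `(1_A]ⁿ = 0_A`. -/
def NilpotentOfClass (A : Algebra σ) (n : ℕ) : Prop := lcs (Con.top : Con A) n = Con.bot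

/-- A congruence is solvable if some term of its derived series is `0_A`. -/
def SolvableCon {A : Algebra σ} (θ : Con A) : Prop := ∃ m, derived θ m = Con.bot

/-- `A` is `n`-supernilpotent if `[1_A,…,1_A]_n = 0_A`. -/
def Supernilpotent (A : Algebra σ) (n : ℕ) : Prop := nfold (Con.top : Con A) n = Con.bot

/-- A polynomial `f` absorbs the tuple `a` to the element `c`. -/
def Absorbs (A : Algebra σ) {k : ℕ} (f : (Fin k → A.carrier) → A.carrier)
    (a : Fin k → A.carrier) (c : A.carrier) : Prop :=
  ∀ b : Fin k → A.carrier, (∃ i, b i = a i) → f b = c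

/-- Terms over a signature with variables in `X`. -/
inductive Term (σ : Signature) (X : Type) : Type
  | var : X → Term σ X
  | app : (o : σ.ops) → (Fin (σ.arity o) → Term σ X) → Term σ X

/-- Evaluation of a term in an algebra under an assignment of the variables. -/
def Term.eval {X : Type} (A : Algebra σ) (v : X → A.carrier) : Term σ X → A.carrier
  | Term.var x => v x
  | Term.app o t => A.interp o fun i => Term.eval A v (t i)

/-- Substitution of terms into a term. -/
def Term.subst {X Y : Type} : Term σ X → (X → Term σ Y) → Term σ Y
  | Term.var x, s => s x
  | Term.app o t, s => Term.app o fun i => Term.subst (t i) s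

/-- `A` possesses a Mal'cev term. -/
def HasMalcevTerm (A : Algebra σ) : Prop :=
  ∃ t : Term σ (Fin 3), ∀ a b : A.carrier,
    t.eval A ![a, b, b] = a ∧ t.eval A ![b, b, a] = a

/-- A class of algebras is a variety when it is the class of all models of a set
of identities. -/
def IsVariety (V : Algebra σ → Prop) : Prop :=
  ∃ E : Set (Term σ ℕ × Term σ ℕ),
    ∀ A : Algebra σ, V A ↔ ∀ e ∈ E, ∀ v : ℕ → A.carrier, e.1.eval A v = e.2.eval A v

/-- Two terms are `V`-equivalent when they evaluate equally in every member of `V`. -/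
def vSetoid (V : Algebra σ → Prop) (X : Type) : Setoid (Term σ X) where
  r t s := ∀ A : Algebra σ, V A → ∀ v : X → A.carrier, t.eval A v = s.eval A v
  iseqv := ⟨fun _ _ _ _ => rfl, fun h A hA v => (h A hA v).symm,
    fun h h' A hA v => (h A hA v).trans (h' A hA v)⟩

/-- The `V`-free algebra on the set `X` of generators. -/
noncomputable def freeAlg (V : Algebra σ → Prop) (X : Type) : Algebra σ where
  carrier := Quotient (vSetoid V X)
  interp o x := Quotient.mk (vSetoid V X) (Term.app o fun i => (x i).out)

/-- The principal congruence `θ(a,b)` generated by the pair `(a,b)`. -/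
def conPair (A : Algebra σ) (a b : A.carrier) : Con A := Con.conGen {(a, b)}

/-- A weak difference term for the class `V`. -/
def IsWeakDiffTerm (V : Algebra σ → Prop) (c : Term σ (Fin 3)) : Prop :=
  ∀ A : Algebra σ, V A → ∀ a b : A.carrier,
    (binComm (conPair A a b) (conPair A a b)).r (c.eval A ![a, b, b]) a ∧
    (binComm (conPair A a b) (conPair A a b)).r a (c.eval A ![b, b, a])

/-- A weak `n`-difference term for the class `V`. -/
def IsWeakNDiffTerm (V : Algebra σ → Prop) (n : ℕ) (c : Term σ (Fin 3)) : Prop :=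
  ∀ A : Algebra σ, V A → ∀ a b : A.carrier,
    (nfold (conPair A a b) n).r (c.eval A ![a, b, b]) a ∧
    (nfold (conPair A a b) n).r a (c.eval A ![b, b, a])

/-- Order-preserving maps on the congruence lattice. -/
def MonotoneCon {A : Algebra σ} (F : Con A → Con A) : Prop :=
  ∀ c d : Con A, c ≤ d → F c ≤ F d

/-- `p` is a weak `f`-term of `A` with respect to the interpretation `F`. -/
def IsWeakFTerm (A : Algebra σ) (F : Con A → Con A) (p : Term σ (Fin 3)) : Prop :=
  ∀ (θ : Con A) (a b : A.carrier), θ.r a b →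
    (F θ).r (p.eval A ![a, b, b]) a ∧ (F θ).r a (p.eval A ![b, b, a])

/-- `p` is a weak `f`-term for the class `V`. -/
def HasWeakFTermVariety (V : Algebra σ → Prop) (p : Term σ (Fin 3)) : Prop :=
  ∀ A : Algebra σ, V A → ∃ F : Con A → Con A, MonotoneCon F ∧ IsWeakFTerm A F p

/-- The set `T^θ_{n,f}(θ₁,…,θₙ)` of pairs coming from polynomials which
`f(θ)`-absorb on the cube `{ā₁,b̄₁}×⋯×{āₙ,b̄ₙ}`. -/
def TSet (A : Algebra σ) (F : Con A → Con A) (θ : Con A) {n : ℕ} (θs : Fin n → Con A) :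
    Set (A.carrier × A.carrier) :=
  {pr | ∃ (N : ℕ) (g : (Fin N → A.carrier) → A.carrier), IsPolynomial A g ∧
    ∃ (gr : Fin N → Fin n) (a b : Fin N → A.carrier),
      (∀ i, (θs (gr i)).r (a i) (b i)) ∧
      (∀ ε : Fin n → Bool, (∃ j, ε j = false) →
        (F θ).r (g (fun i => if ε (gr i) then b i else a i)) (g a)) ∧
      pr = (g b, g a)}

/-- Homomorphisms of algebras. -/
def IsHom (A B : Algebra σ) (h : A.carrier → B.carrier) : Prop :=
  ∀ (o : σ.ops) (x : Fin (σ.arity o) → A.carrier),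
    h (A.interp o x) = B.interp o (fun i => h (x i))

/-- The product of a family of algebras. -/
def prodAlg {I : Type} (As : I → Algebra σ) : Algebra σ where
  carrier := ∀ i, (As i).carrier
  interp o x i := (As i).interp o (fun j => x j i)

/-- The subuniverse generated by a subset. -/
inductive Gen (A : Algebra σ) (S : Set A.carrier) : A.carrier → Prop
  | base {a : A.carrier} : a ∈ S → Gen A S a
  | app (o : σ.ops) (x : Fin (σ.arity o) → A.carrier) :
      (∀ i, Gen A S (x i)) → Gen A S (A.interp o x)

/-- `A` possesses a Taylor term. -/
def HasTaylorTerm (A : Algebra σ) : Prop :=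
  ∃ (n : ℕ) (t : Term σ (Fin n)), 1 ≤ n ∧
    (∀ a : A.carrier, t.eval A (fun _ => a) = a) ∧
    ∀ i : Fin n, ∃ u v : Fin n → Bool, u i = true ∧ v i = false ∧
      ∀ x y : A.carrier,
        t.eval A (fun j => if u j then x else y) = t.eval A (fun j => if v j then x else y)

/-- The variety `V` possesses a Taylor term. -/
def VarietyHasTaylorTerm (V : Algebra σ → Prop) : Prop :=
  ∃ (n : ℕ) (t : Term σ (Fin n)), 1 ≤ n ∧
    (∀ A : Algebra σ, V A → ∀ a : A.carrier, t.eval A (fun _ => a) = a) ∧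
    ∀ i : Fin n, ∃ u v : Fin n → Bool, u i = true ∧ v i = false ∧
      ∀ A : Algebra σ, V A → ∀ x y : A.carrier,
        t.eval A (fun j => if u j then x else y) = t.eval A (fun j => if v j then x else y)

/-- `Ξ(θ)`: the smallest set of congruences containing `θ` and closed under
higher commutators (of arity at least 2) of its members. -/
inductive Xi {A : Algebra σ} (θ : Con A) : Con A → Prop
  | base : Xi θ θ
  | comm {k : ℕ} (γ : Fin (k + 2) → Con A) : (∀ j, Xi θ (γ j)) → Xi θ (commList γ)

/-- An expanded loop on the carrier `α` with extra operations indexed by `ι`. -/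
structure ExpLoop (ι : Type) (ar : ι → ℕ) (α : Type) : Type where
  mul : α → α → α
  ldiv : α → α → α
  rdiv : α → α → α
  zero : α
  extra : (i : ι) → (Fin (ar i) → α) → α
  ldiv_mul : ∀ x y, ldiv x (mul x y) = y
  mul_rdiv : ∀ x y, rdiv (mul x y) y = x
  mul_ldiv : ∀ x y, mul x (ldiv x y) = y
  rdiv_mul : ∀ x y, mul (rdiv x y) y = x
  zero_mul : ∀ x, mul zero x = x
  mul_zero : ∀ x, mul x zero = x

/-- Operation symbols of an expanded loop. -/
inductive LoopOp (ι : Type) : Type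
  | mul | ldiv | rdiv | zero
  | extra : ι → LoopOp ι

/-- The signature of an expanded loop. -/
@[reducible] def loopSig (ι : Type) (ar : ι → ℕ) : Signature where
  ops := LoopOp ι
  arity o := match o with
    | .mul => 2
    | .ldiv => 2
    | .rdiv => 2
    | .zero => 0
    | .extra i => ar i

/-- The algebra underlying an expanded loop. -/
def ExpLoop.toAlgebra {ι : Type} {ar : ι → ℕ} {α : Type} (L : ExpLoop ι ar α) :
    Algebra (loopSig ι ar) where
  carrier := α
  interp o := match o with
    | .mul => fun x => L.mul (x 0) (x 1)
    | .ldiv => fun x => L.ldiv (x 0) (x 1)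
    | .rdiv => fun x => L.rdiv (x 0) (x 1)
    | .zero => fun _ => L.zero
    | .extra i => L.extra i

/-- An expanded loop is of `n`-type. -/
def ExpLoop.IsNType {ι : Type} {ar : ι → ℕ} {α : Type} (L : ExpLoop ι ar α) (n : ℕ) : Prop :=
  (∀ p : Σ k : ℕ, (Fin k → α) → α,
      (∃ i : ι, p = ⟨ar i, L.extra i⟩) ↔
        (1 ≤ p.1 ∧ p.1 ≤ n - 1 ∧ IsPolynomial L.toAlgebra p.2 ∧
          Absorbs L.toAlgebra p.2 (fun _ => L.zero) L.zero)) ∧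
  (∀ f : (Fin (n - 1) → α) → α,
      IsPolynomial L.toAlgebra f → Absorbs L.toAlgebra f (fun _ => L.zero) L.zero →
      ∀ (j : Fin (n - 1)) (x : Fin (n - 1) → α) (u v : α),
        f (Function.update x j (L.mul u v)) =
          L.mul (f (Function.update x j u)) (f (Function.update x j v))) ∧
  (∀ k : ℕ, 2 ≤ k → k < n →
      commList (Fin.snoc (fun _ : Fin (n - k) => (Con.top : Con L.toAlgebra))
        (nfold Con.top k)) = Con.bot)

/-- `A` is polynomially equivalent to an `n`-type expanded loop on the same carrier. -/
def PolyEquivNTypeLoop (A : Algebra σ) (n : ℕ) : Prop :=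
  ∃ (ι : Type) (ar : ι → ℕ) (L : ExpLoop ι ar A.carrier),
    L.IsNType n ∧
    ∀ (k : ℕ) (f : (Fin k → A.carrier) → A.carrier),
      IsPolynomial A f ↔ IsPolynomial L.toAlgebra f

/-- Left-associated product of a list with initial value `c`. -/
def lprodFrom {β : Type} (mul : β → β → β) (c : β) (l : List β) : β := List.foldl mul c l

/-- Left-associated product of a list (with a default value for the empty list). -/
def lprodList {β : Type} (mul : β → β → β) (dflt : β) : List β → β
  | [] => dflt
  | a :: l => List.foldl mul a l

/-- Left-associated product of a nonempty tuple. -/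
def lassoc {β : Type} (mul : β → β → β) : {m : ℕ} → (Fin (m + 1) → β) → β
  | 0, y => y 0
  | (m+1), y => mul (lassoc mul (Fin.init y)) (y (Fin.last (m+1)))

/-- `A` has a representation of degree `n`. -/
def HasRepOfDegree (A : Algebra σ) (n : ℕ) : Prop :=
  ∃ (z : A.carrier) (r : (Fin 2 → A.carrier) → A.carrier),
    IsPolynomial A r ∧ (∀ x : A.carrier, r ![z, x] = x) ∧ (∀ x : A.carrier, r ![x, z] = x) ∧
    ∀ (k : ℕ) (f : (Fin k → A.carrier) → A.carrier), IsPolynomial A f →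
      ∃ (c : A.carrier) (R : ℕ → (Fin k → A.carrier) → A.carrier),
        (∀ m : ℕ, 1 ≤ m → m ≤ min k n →
          ∃ (l : List (Finset (Fin k)))
            (t : (S : Finset (Fin k)) → (Fin S.card → A.carrier) → A.carrier),
            l.Nodup ∧
            (∀ S : Finset (Fin k), S ∈ l ↔ S.card = m) ∧
            (∀ S ∈ l, IsPolynomial A (t S) ∧ Absorbs A (t S) (fun _ => z) z) ∧
            (∀ x : Fin k → A.carrier,
              R m x = lprodList (fun u v => r ![u, v]) z
                (l.map (fun S => t S (fun j => x ((S.orderIsoOfFin rfl j).val)))))) ∧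
        ∀ x : Fin k → A.carrier,
          f x = lprodFrom (fun u v => r ![u, v]) c
            ((List.range' 1 (min k n)).map (fun m => R m x))

/-- Products of `0`-absorbing polynomials (of arities between `lo` and `hi`)
in a given set of variables. -/
inductive ProdOfAbs {ι : Type} {ar : ι → ℕ} {α : Type} (L : ExpLoop ι ar α)
    (lo hi : ℕ) {I : Type} : ((I → α) → α) → Prop
  | base {p : ℕ} (h : (Fin p → α) → α) (sel : Fin p → I) :
      lo ≤ p → p ≤ hi → IsPolynomial L.toAlgebra h →
      Absorbs L.toAlgebra h (fun _ => L.zero) L.zero →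
      ProdOfAbs L lo hi (fun v => h (fun j => v (sel j)))
  | mul {F G : (I → α) → α} :
      ProdOfAbs L lo hi F → ProdOfAbs L lo hi G →
      ProdOfAbs L lo hi (fun v => L.mul (F v) (G v))

/-- The terms `q_m` (for `m ≥ 2`, `qSeq q (m-2)` is `q_m`):
`q₂ := q`, `q_{m+1}(x,y,z) := q(x, q_m(x,y,y), q_m(x,y,z))`. -/
def qSeq (q : Term σ (Fin 3)) : ℕ → Term σ (Fin 3)
  | 0 => q
  | (k+1) => q.subst ![Term.var 0, (qSeq q k).subst ![Term.var 0, Term.var 1, Term.var 1], qSeq q k]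


/-!
If the algebra `Δ(θ, …, θ)` of `n`-dimensional cubes contains one with `v` at one corner and `u`
at all others, then `(u, v)` belongs to the `n`-fold commutator `[θ, …, θ]`. So it suffices to
find, for a nonabelian cover `γ ≺ s` and in every dimension, such a corner cube over `s` with
`(u, v) ∉ γ`.

This goes by induction on the dimension. Since `γ ≺ s` is a cover, `γ ∨ Cg(u, v) = s`, and by
Mal'cev's theorem every pair of `s` is, modulo `γ`, the image of `(u, v)` under a unary polynomial.
Take a square over `s` witnessing that `γ ≺ s` is not abelian. In each generator of that square
along its first direction the edge can be replaced by the image of the `k`-dimensional corner cube,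
which changes the square only modulo `γ` and turns it into a `(k + 1)`-dimensional cube. Taking
Mal'cev differences in both directions of the square makes the result constant off the corner,
whereas the failure of centrality keeps the value at the corner apart from it modulo `γ`.
-/

theorem IsPolynomial.comp_induction {A : Algebra σ} {X : Type*} {S : (X → A.carrier) → Prop}
    (const : ∀ a, S fun _ => a)
    (app : ∀ (o : σ.ops) (G : Fin (σ.arity o) → X → A.carrier), (∀ j, S (G j)) →
      S fun x => A.interp o fun j => G j x)
    {n : ℕ} {p : (Fin n → A.carrier) → A.carrier} (hp : IsPolynomial A p)
    (q : Fin n → X → A.carrier) (hq : ∀ i, S (q i)) : S fun x => p fun i => q i x := by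
  induction hp with
  | proj i => exact hq i
  | const a => exact const a
  | app o g _ ih => exact app o _ fun j => ih j

theorem IsPolynomial.comp {A : Algebra σ} {n l : ℕ} {p : (Fin n → A.carrier) → A.carrier}
    (hp : IsPolynomial A p) (q : Fin n → (Fin l → A.carrier) → A.carrier)
    (hq : ∀ i, IsPolynomial A (q i)) : IsPolynomial A fun x => p fun i => q i x :=
  hp.comp_induction .const .app q hq

theorem IsPolynomial.rel_of_compat {A : Algebra σ} {r : A.carrier → A.carrier → Prop}
    (refl : ∀ a, r a a)
    (compat : ∀ (o : σ.ops) (x y : Fin (σ.arity o) → A.carrier),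
      (∀ i, r (x i) (y i)) → r (A.interp o x) (A.interp o y))
    {n : ℕ} {p : (Fin n → A.carrier) → A.carrier} (hp : IsPolynomial A p)
    {x y : Fin n → A.carrier} (h : ∀ i, r (x i) (y i)) : r (p x) (p y) :=
  hp.comp_induction (S := fun f : Bool → A.carrier => r (f false) (f true)) refl
    (fun o _ hG => compat o _ _ hG) (fun i b => bif b then y i else x i) h

theorem Term.isPolynomial_eval (A : Algebra σ) {n : ℕ} (t : Term σ (Fin n)) :
    IsPolynomial A fun x => t.eval A x := by
  induction t with
  | var i => exact .proj i
  | app o t ih => exact .app o _ ih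

/-- A unary polynomial of `A`, curried so that it can be applied to elements directly. -/
def IsUnaryPolynomial (A : Algebra σ) (f : A.carrier → A.carrier) : Prop :=
  IsPolynomial A fun x : Fin 1 → A.carrier => f (x 0)

/-- A ternary polynomial, in curried form, that satisfies the Mal'cev identities. -/
structure IsMalcevPolynomial (A : Algebra σ)
    (m : A.carrier → A.carrier → A.carrier → A.carrier) : Prop where
  isPolynomial : IsPolynomial A fun x : Fin 3 → A.carrier => m (x 0) (x 1) (x 2)
  right_cancel : ∀ a b, m a b b = a
  left_cancel : ∀ a b, m b b a = a

theorem HasMalcevTerm.exists_isMalcevPolynomial {A : Algebra σ} (hM : HasMalcevTerm A) :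
    ∃ m, IsMalcevPolynomial A m := by
  obtain ⟨t, ht⟩ := hM
  refine ⟨fun a b c => t.eval A ![a, b, c], ?_, fun a b => (ht a b).1, fun a b => (ht a b).2⟩
  refine t.isPolynomial_eval A |>.comp (fun i x => ![x 0, x 1, x 2] i) fun i => ?_
  fin_cases i
  exacts [.proj 0, .proj 1, .proj 2]

namespace IsMalcevPolynomial

variable {A : Algebra σ} {m : A.carrier → A.carrier → A.carrier → A.carrier}

theorem rel_of_compat (hm : IsMalcevPolynomial A m) {r : A.carrier → A.carrier → Prop}
    (refl : ∀ a, r a a)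
    (compat : ∀ (o : σ.ops) (x y : Fin (σ.arity o) → A.carrier),
      (∀ i, r (x i) (y i)) → r (A.interp o x) (A.interp o y))
    {x x' y y' z z' : A.carrier} (hx : r x x') (hy : r y y') (hz : r z z') :
    r (m x y z) (m x' y' z') := by
  refine hm.isPolynomial.rel_of_compat refl compat (x := ![x, y, z]) (y := ![x', y', z'])
    fun i => ?_
  fin_cases i
  exacts [hx, hy, hz]

theorem rel (hm : IsMalcevPolynomial A m) (c : Con A) {x x' y y' z z' : A.carrier}
    (hx : c.r x x') (hy : c.r y y') (hz : c.r z z') : c.r (m x y z) (m x' y' z') :=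
  hm.rel_of_compat c.refl c.compat hx hy hz

end IsMalcevPolynomial

namespace Con

variable {A : Algebra σ} {m : A.carrier → A.carrier → A.carrier → A.carrier} {γ s : Con A}
  {u v : A.carrier}

/-- Mal'cev's theorem: in the presence of a Mal'cev polynomial, every reflexive compatible
relation is a congruence. -/
def ofReflexive (hm : IsMalcevPolynomial A m) (r : A.carrier → A.carrier → Prop)
    (refl : ∀ a, r a a)
    (compat : ∀ (o : σ.ops) (x y : Fin (σ.arity o) → A.carrier),
      (∀ i, r (x i) (y i)) → r (A.interp o x) (A.interp o y)) : Con A where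
  r := r
  refl := refl
  symm {a b} h := by
    simpa only [hm.left_cancel, hm.right_cancel] using
      hm.rel_of_compat refl compat (refl a) h (refl b)
  trans {a b c} h h' := by
    simpa only [hm.left_cancel, hm.right_cancel] using
      hm.rel_of_compat refl compat h (refl b) h'
  compat := compat

/-- The congruence `γ ∨ Cg(u, v)` of an algebra with a Mal'cev polynomial, described as the
`γ`-closure of the set of images of `(u, v)` under unary polynomials. -/
def adjoinPair (hm : IsMalcevPolynomial A m) (γ : Con A) (u v : A.carrier) : Con A :=
  ofReflexive hm
    (fun x y => ∃ f, IsUnaryPolynomial A f ∧ γ.r x (f u) ∧ γ.r y (f v))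
    (fun a => ⟨fun _ => a, .const a, γ.refl a, γ.refl a⟩)
    (fun o x y h => by
      choose f hf hu hv using h
      exact ⟨fun z => A.interp o fun j => f j z, .app o _ hf, γ.compat o _ _ hu,
        γ.compat o _ _ hv⟩)

theorem le_adjoinPair (hm : IsMalcevPolynomial A m) : γ ≤ adjoinPair hm γ u v :=
  fun a _ h => ⟨fun _ => a, .const a, γ.refl a, γ.symm h⟩

theorem adjoinPair_rel (hm : IsMalcevPolynomial A m) : (adjoinPair hm γ u v).r u v :=
  ⟨id, .proj 0, γ.refl u, γ.refl v⟩

theorem adjoinPair_le (hm : IsMalcevPolynomial A m) (hγs : γ ≤ s) (huv : s.r u v) :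
    adjoinPair hm γ u v ≤ s := by
  rintro a b ⟨f, hf, ha, hb⟩
  have hfuv : s.r (f u) (f v) :=
    hf.rel_of_compat s.refl s.compat (x := fun _ => u) (y := fun _ => v) fun _ => huv
  exact s.trans (hγs _ _ ha) (s.trans hfuv (s.symm (hγs _ _ hb)))

theorem Covers.exists_isUnaryPolynomial (hc : Covers γ s) (hm : IsMalcevPolynomial A m)
    (huv : s.r u v) (hγuv : ¬ γ.r u v) {x y : A.carrier} (hxy : s.r x y) :
    ∃ f, IsUnaryPolynomial A f ∧ γ.r x (f u) ∧ γ.r y (f v) := by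
  have hlt : γ < adjoinPair hm γ u v :=
    ⟨le_adjoinPair hm, fun h => hγuv (h u v (adjoinPair_rel hm))⟩
  have heq : adjoinPair hm γ u v = s := hc.2 _ hlt (adjoinPair_le hm hc.1.1 huv)
  rw [← heq] at hxy
  exact hxy

theorem Covers.exists_rel_not_rel (hc : Covers γ s) : ∃ u v, s.r u v ∧ ¬ γ.r u v := by
  by_contra! h
  exact hc.1.2 h

end Con

/-- The algebra `Δ(θ₀, …, θ_{k-1})` of `k`-dimensional cubes: the subalgebra of `A ^ (2 ^ k)`
generated by the constant cubes and, for every direction `j` and every pair in `θ j`, the cube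
that takes the two values of that pair on the two faces orthogonal to `j`. -/
inductive IsCube {A : Algebra σ} {k : ℕ} (θ : Fin k → Con A) :
    ((Fin k → Bool) → A.carrier) → Prop
  | edge (j : Fin k) (a b : A.carrier) : (θ j).r a b → IsCube θ fun ε => if ε j then b else a
  | const (a : A.carrier) : IsCube θ fun _ => a
  | app (o : σ.ops) (G : Fin (σ.arity o) → (Fin k → Bool) → A.carrier) :
      (∀ j, IsCube θ (G j)) → IsCube θ fun ε => A.interp o fun j => G j ε

/-- The cube with value `v` at the vertex `(true, …, true)` and `u` at all other vertices. -/
def cornerCube {X : Type*} {k : ℕ} (u v : X) (ε : Fin k → Bool) : X :=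
  if ∀ i, ε i then v else u

theorem cornerCube_true {X : Type*} {k : ℕ} (u v : X) :
    cornerCube u v (fun _ : Fin k => true) = v :=
  if_pos fun _ => rfl

theorem cornerCube_of_eq_false {X : Type*} {k : ℕ} (u v : X) {ε : Fin k → Bool} {j : Fin k}
    (hj : ε j = false) : cornerCube u v ε = u :=
  if_neg fun h => Bool.false_ne_true (hj.symm.trans (h j))

namespace IsCube

variable {A : Algebra σ} {k l : ℕ} {θ : Fin k → Con A} {F : (Fin k → Bool) → A.carrier}

theorem comp_polynomial {n : ℕ} {p : (Fin n → A.carrier) → A.carrier} (hp : IsPolynomial A p)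
    (q : Fin n → (Fin k → Bool) → A.carrier) (hq : ∀ i, IsCube θ (q i)) :
    IsCube θ fun ε => p fun i => q i ε :=
  hp.comp_induction .const .app q hq

theorem comp_unaryPolynomial {f : A.carrier → A.carrier} (hf : IsUnaryPolynomial A f)
    (hF : IsCube θ F) : IsCube θ fun ε => f (F ε) :=
  comp_polynomial hf (fun _ => F) fun _ => hF

theorem comp_malcev {m : A.carrier → A.carrier → A.carrier → A.carrier}
    (hm : IsMalcevPolynomial A m) {G H : (Fin k → Bool) → A.carrier} (hF : IsCube θ F)
    (hG : IsCube θ G) (hH : IsCube θ H) : IsCube θ fun ε => m (F ε) (G ε) (H ε) := by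
  refine comp_polynomial hm.isPolynomial ![F, G, H] fun i => ?_
  fin_cases i
  exacts [hF, hG, hH]

theorem substitute {θ' : Fin l → Con A} (hF : IsCube θ F) (φ : (Fin l → Bool) → Fin k → Bool)
    (hφ : ∀ j a b, (θ j).r a b → IsCube θ' fun ε => if φ ε j then b else a) :
    IsCube θ' fun ε => F (φ ε) := by
  induction hF with
  | edge j a b h => exact hφ j a b h
  | const a => exact .const a
  | app o G _ ih => exact .app o _ ih

theorem mono {θ' : Fin k → Con A} (h : ∀ j, θ j ≤ θ' j) (hF : IsCube θ F) : IsCube θ' F :=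
  hF.substitute id fun j a b hab => .edge j a b (h j a b hab)

theorem face (S : Finset (Fin k)) (hF : IsCube θ F) :
    IsCube θ fun ε => F fun i => if i ∈ S then false else ε i := by
  refine hF.substitute _ fun j a b hab => ?_
  by_cases hj : j ∈ S
  · simpa only [if_pos hj] using .const a
  · simpa only [if_neg hj] using .edge j a b hab

theorem rel {c : Con A} (h : ∀ j, θ j ≤ c) (hF : IsCube θ F) (ε ε' : Fin k → Bool) :
    c.r (F ε) (F ε') := by
  induction hF with
  | edge j a b hab =>
    have hc : c.r a b := h j a b hab
    dsimp only
    split_ifs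
    exacts [c.refl b, c.symm hc, hc, c.refl a]
  | const a => exact c.refl a
  | app o G _ ih => exact c.compat o _ _ ih

theorem rel_of_cornerCube {c : Con A} {θ : Fin (k + 1) → Con A} {u v : A.carrier}
    (h : ∀ j, θ j ≤ c) (hcorner : IsCube θ (cornerCube u v)) : c.r u v := by
  have huv := hcorner.rel h (fun _ => false) fun _ => true
  rwa [cornerCube_of_eq_false u v (j := 0) rfl, cornerCube_true] at huv

theorem exists_eq_chooseVec (hF : IsCube θ F) :
    ∃ (N : ℕ) (p : (Fin N → A.carrier) → A.carrier) (g : Fin N → Fin k)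
      (a b : Fin N → A.carrier), IsPolynomial A p ∧ (∀ i, (θ (g i)).r (a i) (b i)) ∧
      F = fun ε => p (chooseVec g a b ε) := by
  induction hF with
  | edge j a b h =>
    exact ⟨1, fun x => x 0, fun _ => j, fun _ => a, fun _ => b, .proj 0, fun _ => h, rfl⟩
  | const a =>
    exact ⟨0, fun _ => a, Fin.elim0, Fin.elim0, Fin.elim0, .const a, fun i => i.elim0, rfl⟩
  | app o G _ ih =>
    choose N p g a b hp hab hG using ih
    refine ⟨∑ j, N j, fun x => A.interp o fun j => p j fun i => x (finSigmaFinEquiv ⟨j, i⟩),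
      Sigma.uncurry g ∘ finSigmaFinEquiv.symm, Sigma.uncurry a ∘ finSigmaFinEquiv.symm,
      Sigma.uncurry b ∘ finSigmaFinEquiv.symm,
      .app o _ fun j => (hp j).comp _ fun i => .proj (finSigmaFinEquiv ⟨j, i⟩),
      fun i => hab _ _, ?_⟩
    funext ε
    simp only [hG, chooseVec, Function.comp_apply, Equiv.symm_apply_apply]
    rfl

end IsCube

theorem lastCases_castSucc_last {X : Type*} {n : ℕ} (f : Fin (n + 1) → X) (i : Fin (n + 1)) :
    Fin.lastCases (motive := fun _ => X) (f (Fin.last n)) (fun j => f j.castSucc) i = f i := by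
  cases i using Fin.lastCases with
  | last => exact Fin.lastCases_last
  | cast j => exact Fin.lastCases_castSucc j

theorem centralizes_iff_forall_isCube {A : Algebra σ} {n : ℕ} {θ : Fin (n + 1) → Con A}
    {δ : Con A} :
    Centralizes (fun j : Fin n => θ j.castSucc) (θ (Fin.last n)) δ ↔
      ∀ F, IsCube θ F →
        (∀ ε : Fin n → Bool, ε ≠ (fun _ => true) →
          δ.r (F (Fin.lastCases (motive := fun _ => Bool) false ε))
            (F (Fin.lastCases (motive := fun _ => Bool) true ε))) →
        δ.r (F (Fin.lastCases (motive := fun _ => Bool) false fun _ => true))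
          (F (Fin.lastCases (motive := fun _ => Bool) true fun _ => true)) := by
  simp only [Centralizes, lastCases_castSucc_last θ]
  constructor
  · intro h F hF
    obtain ⟨N, p, g, a, b, hp, hab, rfl⟩ := hF.exists_eq_chooseVec
    exact h N p hp g a b hab
  · intro h N p hp g a b hab
    exact h _ (IsCube.comp_polynomial hp (fun i ε => if ε (g i) then b i else a i)
      fun i => .edge (g i) (a i) (b i) (hab i))

theorem centralizes_of_forall_square {A : Algebra σ} {s γ : Con A}
    (h : ∀ F, IsCube (fun _ : Fin 2 => s) F → γ.r (F ![false, false]) (F ![false, true]) →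
      γ.r (F ![true, false]) (F ![true, true])) :
    Centralizes (fun _ : Fin 1 => s) s γ := by
  have hsquare : ∀ x y : Bool,
      Fin.lastCases (motive := fun _ => Bool) y (fun _ : Fin 1 => x) = ![x, y] := by
    intro x y
    funext i
    fin_cases i <;> rfl
  refine (centralizes_iff_forall_isCube (θ := fun _ => s)).2 fun F hF hne => ?_
  have hbase := hne (fun _ => false) fun h => Bool.false_ne_true (congrFun h 0)
  rw [hsquare, hsquare] at hbase ⊢
  exact h F hF hbase

theorem IsCube.commList_rel {A : Algebra σ} {k : ℕ} {θ : Fin (k + 1) → Con A}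
    {u v : A.carrier} (h : IsCube θ (cornerCube u v)) : (commList θ).r u v := by
  cases k with
  | zero =>
    exact h.rel_of_cornerCube (Fin.forall_fin_one.2 fun _ _ => id)
  | succ n =>
    intro δ hδ
    have hcorner := centralizes_iff_forall_isCube.1 hδ _ h fun ε hε => by
      obtain ⟨j, hj⟩ := Function.ne_iff.1 hε
      have hfalse : ∀ y, Fin.lastCases (motive := fun _ => Bool) y ε j.castSucc = false :=
        fun y => Fin.lastCases_castSucc j |>.trans (Bool.eq_false_of_not_eq_true hj)
      rw [cornerCube_of_eq_false u v (hfalse _), cornerCube_of_eq_false u v (hfalse _)]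
      exact δ.refl u
    have htop := funext (lastCases_castSucc_last fun _ : Fin (n + 2) => true)
    rwa [cornerCube_of_eq_false u v (j := Fin.last _) Fin.lastCases_last, htop,
      cornerCube_true] at hcorner

/-- The vertex map `{0,1}^(k+1) → {0,1}²` along which a square is inflated to a `(k+1)`-cube: the
first `k` coordinates are replaced by their conjunction. -/
def collapse {k : ℕ} (ε : Fin (k + 1) → Bool) : Fin 2 → Bool :=
  ![decide (∀ i : Fin k, ε i.castSucc), ε (Fin.last k)]

theorem cornerCube_eq_cornerCube_collapse {X : Type*} {k : ℕ} (u v : X)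
    (ε : Fin (k + 1) → Bool) : cornerCube u v ε = cornerCube u v (collapse ε) := by
  refine if_congr ?_ rfl rfl
  rw [Fin.forall_fin_succ', Fin.forall_fin_two]
  exact and_congr_left' decide_eq_true_iff.symm

theorem Con.Covers.exists_inflation {A : Algebra σ}
    {m : A.carrier → A.carrier → A.carrier → A.carrier} {γ s : Con A} (hc : Covers γ s)
    (hm : IsMalcevPolynomial A m) {k : ℕ} {u v : A.carrier}
    (huv : s.r u v) (hγuv : ¬ γ.r u v)
    (hcorner : IsCube (fun _ : Fin k => s) (cornerCube u v))
    {H : (Fin 2 → Bool) → A.carrier} (hH : IsCube (fun _ : Fin 2 => s) H) :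
    ∃ C : (Fin 2 → Bool) → A.carrier, (∀ η, γ.r (H η) (C η)) ∧
      IsCube (fun _ : Fin (k + 1) => s) fun ε => C (collapse ε) := by
  induction hH with
  | edge j a b hab =>
    fin_cases j
    · obtain ⟨f, hf, ha, hb⟩ := hc.exists_isUnaryPolynomial hm huv hγuv hab
      refine ⟨fun η => f (if η 0 then v else u), fun η => ?_, ?_⟩
      · dsimp only [Fin.zero_eta]
        split_ifs
        exacts [hb, ha]
      · have hlift : IsCube (fun _ : Fin (k + 1) => s)
            fun ε => cornerCube u v fun i : Fin k => ε i.castSucc :=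
          hcorner.substitute _ fun j => .edge (θ := fun _ => s) j.castSucc
        simpa [collapse, cornerCube] using hlift.comp_unaryPolynomial hf
    · exact ⟨_, fun η => γ.refl _, .edge (Fin.last k) a b hab⟩
  | const a => exact ⟨_, fun _ => γ.refl a, .const a⟩
  | app o G _ ih =>
    choose C hHC hC using ih
    exact ⟨_, fun η => γ.compat o _ _ fun j => hHC j η, .app o _ hC⟩

theorem IsCube.cornerCube_of_collapse {A : Algebra σ}
    {m : A.carrier → A.carrier → A.carrier → A.carrier} (hm : IsMalcevPolynomial A m) {k : ℕ}
    {θ : Fin (k + 2) → Con A} {C : (Fin 2 → Bool) → A.carrier}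
    (hC : IsCube θ fun ε => C (collapse ε)) (w : A.carrier) :
    IsCube θ (cornerCube w
      (m (m (C ![true, true]) (C ![true, false]) w)
        (m (C ![false, true]) (C ![false, false]) w) w)) := by
  have hlast : IsCube θ fun ε => C ![collapse ε 0, false] := by
    simpa [collapse, Fin.castSucc_ne_last] using hC.face {Fin.last (k + 1)}
  have hinit : IsCube θ fun ε => C ![false, collapse ε 1] := by
    simpa [collapse, Fin.castSucc_ne_last] using hC.face {Fin.last (k + 1)}ᶜ
  convert comp_malcev hm (comp_malcev hm hC hlast (.const w))
    (comp_malcev hm hinit (.const (C ![false, false])) (.const w)) (.const w) using 1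
  funext ε
  obtain ⟨x, y, hxy⟩ : ∃ x y, collapse ε = ![x, y] := ⟨_, _, rfl⟩
  rw [cornerCube_eq_cornerCube_collapse, hxy]
  cases x <;> cases y <;> simp [cornerCube, hm.left_cancel]

theorem Con.Covers.exists_isCube_cornerCube {A : Algebra σ}
    {m : A.carrier → A.carrier → A.carrier → A.carrier} {γ s : Con A} (hc : Covers γ s)
    (hm : IsMalcevPolynomial A m) (hnc : ¬ Centralizes (fun _ : Fin 1 => s) s γ) (k : ℕ) :
    ∃ u v, ¬ γ.r u v ∧ IsCube (fun _ : Fin (k + 1) => s) (cornerCube u v) := by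
  induction k with
  | zero =>
    obtain ⟨u, v, huv, hγuv⟩ := hc.exists_rel_not_rel
    have hedge : cornerCube u v = fun ε : Fin 1 → Bool => if ε 0 then v else u :=
      funext fun ε => by simp only [cornerCube, Fin.forall_fin_one]
    exact ⟨u, v, hγuv, hedge ▸ .edge 0 u v huv⟩
  | succ k ih =>
    obtain ⟨u, v, hγuv, hcorner⟩ := ih
    have huv : s.r u v := hcorner.rel_of_cornerCube fun _ _ _ => id
    obtain ⟨H, hH, h₀, h₁⟩ : ∃ H, IsCube (fun _ : Fin 2 => s) H ∧
        γ.r (H ![false, false]) (H ![false, true]) ∧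
        ¬ γ.r (H ![true, false]) (H ![true, true]) := by
      by_contra! h
      exact hnc (centralizes_of_forall_square h)
    obtain ⟨C, hHC, hC⟩ := hc.exists_inflation hm huv hγuv hcorner hH
    refine ⟨_, _, fun hγ => h₁ (γ.trans hγ ?_), hC.cornerCube_of_collapse hm (H ![true, false])⟩
    have hbot : γ.r (m (C ![false, true]) (C ![false, false]) (H ![true, false]))
        (H ![true, false]) := by
      simpa only [hm.left_cancel] using hm.rel γ (γ.symm (γ.trans h₀ (hHC ![false, true])))
        (γ.symm (hHC ![false, false])) (γ.refl (H ![true, false]))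
    have htop : γ.r (m (C ![true, true]) (C ![true, false]) (H ![true, false]))
        (H ![true, true]) := by
      simpa only [hm.right_cancel] using
        hm.rel γ (γ.symm (hHC ![true, true])) (γ.symm (hHC ![true, false]))
          (γ.refl (H ![true, false]))
    simpa only [hm.right_cancel] using hm.rel γ htop hbot (γ.refl (H ![true, false]))

theorem malcev_supernilpotent_interval_covers_abelian_general {A : Algebra σ}
    {m : A.carrier → A.carrier → A.carrier → A.carrier} (hm : IsMalcevPolynomial A m) {n : ℕ}
    {β γ s : Con A} (hsn : nfold β n ≤ γ) (hc : Con.Covers γ s) (hsβ : s ≤ β) :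
    Centralizes (fun _ : Fin 1 => s) s γ := by
  by_contra hnc
  obtain ⟨u, v, hγuv, hcorner⟩ := hc.exists_isCube_cornerCube hm hnc (n - 1)
  exact hγuv (hsn u v (hcorner.mono fun _ => hsβ).commList_rel)

/-- Lemma 4.2 of "On Supernilpotent Algebras": in a Mal'cev algebra, every cover
inside an `n`-supernilpotent interval of the congruence lattice is abelian. -/
theorem malcev_supernilpotent_interval_covers_abelian {σ : Signature} (A : Algebra σ)
    (hM : HasMalcevTerm A) (n : ℕ) (hn : 2 ≤ n)
    (α β : Con A) (hab : α ≤ β) (hsn : nfold β n ≤ α) :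
    ∀ γ s : Con A, α ≤ γ → Con.Covers γ s → s ≤ β →
      Centralizes (fun _ : Fin 1 => s) s γ := by
  obtain ⟨m, hm⟩ := hM.exists_isMalcevPolynomial
  exact fun γ s hαγ => malcev_supernilpotent_interval_covers_abelian_general hm
    fun a b h => hαγ a b (hsn a b h)

end UA
end

section
/- Let A be a finite algebra and suppose (α,β) is an n-supernilpotent interval in the congruence lattice of A for some n ≥ 2. Then for every covering pair γ ≺ σ with α ≤ γ ≺ σ ≤ β, the interval (γ,σ) is abelian, i.e., C(σ,σ;γ) holds in A. -/
set_option autoImplicit false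

namespace UA

variable {σ : Signature}

/-!
A twin snag is a pair `c, d` on which one member of a twin family is the identity while another is
constant with value `d`. Composing the members along the directions of an `n`-dimensional cube
yields a polynomial cube equal to `c` at a single vertex and to `d` elsewhere, so the `n`-ary term
condition modulo `γ` forces `c` and `d` to be `γ`-congruent.

Conversely, suppose that `γ` is covered by `s` and that the pair of every twin snag of `s` lies in
`γ`. Then every twin of a permutation of a `⟨γ, s⟩`-minimal set `U` permutes `U`. If the cover were
not abelian, two twins would agree modulo `γ` at one point of `U` and not at another one. Passing
from one to the other one parameter at a time produces a binary polynomial that is a permutation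
of `U` in each variable, whose iterates provide a subtraction. Subtracting one twin from
itself collapses two points of `U`; subtracting it from the other twin does not. This contradicts
that twins permute `U` together.
-/

theorem rel_of_update {ι X Y : Type*} [Finite ι] [DecidableEq ι] {R : Y → Y → Prop}
    (hrefl : ∀ a, R a a) (htrans : ∀ {a b c}, R a b → R b c → R a c) {F : (ι → X) → Y}
    {x y : ι → X}
    (h : ∀ z : ι → X, (∀ j, z j = x j ∨ z j = y j) →
      ∀ i, R (F (Function.update z i (x i))) (F (Function.update z i (y i)))) :
    R (F x) (F y) := by
  cases nonempty_fintype ι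
  suffices ∀ t : Finset ι, R (F x) (F (t.piecewise y x)) by simpa using this Finset.univ
  intro t
  induction t using Finset.induction_on with
  | empty => simpa using hrefl (F x)
  | insert i t hi ih =>
    have hz : ∀ j, t.piecewise y x j = x j ∨ t.piecewise y x j = y j := fun j =>
      (em (j ∈ t)).symm.imp (Finset.piecewise_eq_of_notMem t y x)
        (Finset.piecewise_eq_of_mem t y x)
    have hstep := h _ hz i
    rw [← Finset.piecewise_insert, ← Finset.piecewise_eq_of_notMem t y x hi,
      Function.update_eq_self] at hstep
    exact htrans ih hstep

section PolyGen

variable {A : Algebra σ} {S T X : Type}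

/-- The functions on `S` obtained from the functions in `G` and the constants by applying
operations of `A` pointwise: the subuniverse of `A^S` generated by `G` and the constant tuples. -/
inductive PolyGen (A : Algebra σ) {S : Type} (G : Set (S → A.carrier)) :
    (S → A.carrier) → Prop
  | gen {f : S → A.carrier} (hf : f ∈ G) : PolyGen A G f
  | const (a : A.carrier) : PolyGen A G (fun _ => a)
  | app (o : σ.ops) (f : Fin (σ.arity o) → S → A.carrier) (hf : ∀ j, PolyGen A G (f j)) :
      PolyGen A G (fun x => A.interp o fun j => f j x)

/-- The generators on `S × T` that are a generator in `G` of the first coordinate or a generator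
in `H` of the second. -/
def prodGen (G : Set (S → X)) (H : Set (T → X)) : Set (S × T → X) :=
  (fun k p => k p.1) '' G ∪ (fun k p => k p.2) '' H

theorem fst_mem_prodGen {G : Set (S → X)} {H : Set (T → X)} {k : S → X} (hk : k ∈ G) :
    (fun p : S × T => k p.1) ∈ prodGen G H :=
  Or.inl ⟨k, hk, rfl⟩

theorem snd_mem_prodGen {G : Set (S → X)} {H : Set (T → X)} {k : T → X} (hk : k ∈ H) :
    (fun p : S × T => k p.2) ∈ prodGen G H :=
  Or.inr ⟨k, hk, rfl⟩

namespace PolyGen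

variable {G : Set (S → A.carrier)} {H : Set (T → A.carrier)} {K : Set (X → A.carrier)}

theorem comp {f : S → A.carrier} (hf : PolyGen A G f) (φ : X → S)
    (hφ : ∀ k ∈ G, PolyGen A K (fun x => k (φ x))) : PolyGen A K (fun x => f (φ x)) := by
  induction hf with
  | gen hk => exact hφ _ hk
  | const a => exact const a
  | app o f _ ih => exact app o (fun j x => f j (φ x)) ih

theorem comp₂ {f : S × T → A.carrier} (hf : PolyGen A (prodGen G H) f) (φ : X → S) (ψ : X → T)
    (hφ : ∀ k ∈ G, PolyGen A K (fun x => k (φ x)))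
    (hψ : ∀ k ∈ H, PolyGen A K (fun x => k (ψ x))) : PolyGen A K (fun x => f (φ x, ψ x)) := by
  refine hf.comp (fun x => (φ x, ψ x)) ?_
  rintro _ (⟨k, hk, rfl⟩ | ⟨k, hk, rfl⟩)
  · exact hφ k hk
  · exact hψ k hk

theorem fst {f : S → A.carrier} (hf : PolyGen A G f) :
    PolyGen A (prodGen G H) (fun p => f p.1) :=
  hf.comp Prod.fst fun _ hk => gen (fst_mem_prodGen hk)

theorem snd {f : T → A.carrier} (hf : PolyGen A H f) :
    PolyGen A (prodGen G H) (fun p => f p.2) :=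
  hf.comp Prod.snd fun _ hk => gen (snd_mem_prodGen hk)

theorem rel {f : S → A.carrier} (hf : PolyGen A G f) (c : Con A) {x y : S}
    (h : ∀ k ∈ G, c.r (k x) (k y)) : c.r (f x) (f y) := by
  induction hf with
  | gen hk => exact h _ hk
  | const a => exact c.refl a
  | app o _ _ ih => exact c.compat o _ _ ih

theorem exists_isPolynomial [Finite G] {f : S → A.carrier} (hf : PolyGen A G f) :
    ∃ p : (Fin (Nat.card G) → A.carrier) → A.carrier, IsPolynomial A p ∧
      ∀ x, f x = p fun i => ((Finite.equivFin G).symm i).1 x := by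
  induction hf with
  | @gen k hk =>
    refine ⟨fun x => x (Finite.equivFin G ⟨k, hk⟩), .proj _, fun x => ?_⟩
    simp only [Equiv.symm_apply_apply]
  | const a => exact ⟨fun _ => a, .const a, fun _ => rfl⟩
  | app o _ _ ih =>
    choose p hp hfp using ih
    exact ⟨_, .app o p hp, fun x => congrArg _ (funext fun j => hfp j x)⟩

end PolyGen

theorem IsPolynomial.comp_polyGen {N : ℕ} {p : (Fin N → A.carrier) → A.carrier}
    (hp : IsPolynomial A p) {K : Set (X → A.carrier)} {k : Fin N → X → A.carrier}
    (hk : ∀ i, PolyGen A K (k i)) : PolyGen A K (fun x => p fun i => k i x) := by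
  induction hp with
  | proj i => exact hk i
  | const a => exact .const a
  | app o g _ ih => exact .app o (fun j x => g j fun i => k i x) ih

end PolyGen

section Polynomials

variable {A : Algebra σ} {X : Type} {K : Set (X → A.carrier)}

/-- Unary polynomials of `A`. -/
def IsUnaryPoly (A : Algebra σ) (f : A.carrier → A.carrier) : Prop := PolyGen A {id} f

/-- Binary polynomials of `A`, in curried form. -/
def IsBinaryPoly (A : Algebra σ) (g : A.carrier → A.carrier → A.carrier) : Prop :=
  PolyGen A (prodGen {id} {id}) fun p => g p.1 p.2

theorem isUnaryPoly_id : IsUnaryPoly A fun x => x := .gen rfl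

theorem IsUnaryPoly.comp_polyGen {h : A.carrier → A.carrier} (hh : IsUnaryPoly A h)
    {f : X → A.carrier} (hf : PolyGen A K f) : PolyGen A K fun x => h (f x) :=
  hh.comp f (by rintro _ rfl; exact hf)

theorem IsUnaryPoly.rel {h : A.carrier → A.carrier} (hh : IsUnaryPoly A h) (c : Con A)
    {x y : A.carrier} (hxy : c.r x y) : c.r (h x) (h y) :=
  PolyGen.rel hh c (by rintro _ rfl; exact hxy)

theorem IsUnaryPoly.iterate {h : A.carrier → A.carrier} (hh : IsUnaryPoly A h) (m : ℕ) :
    IsUnaryPoly A h^[m] := by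
  induction m with
  | zero => exact isUnaryPoly_id
  | succ m ih => exact ih.comp_polyGen hh

end Polynomials

section TwinFamilies

variable {A : Algebra σ} {s : Con A} {S T X : Type} {K : Set (X → A.carrier)}

/-- The families of pairwise `s`-congruent elements indexed by `T`. -/
def Con.congruentMaps (s : Con A) (T : Type) : Set (T → A.carrier) :=
  {k | ∀ t t', s.r (k t) (k t')}

theorem Con.cond_mem_congruentMaps {a b : A.carrier} (h : s.r a b) :
    (fun t : Bool => if t then b else a) ∈ s.congruentMaps Bool := by
  rintro (_ | _) (_ | _)
  exacts [s.refl _, h, s.symm h, s.refl _]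

/-- A family of twin polynomials: `F t x = p (x, c t)` for a polynomial `p` and parameter tuples
`c t` that are pairwise `s`-congruent. -/
def IsTwinFamily (s : Con A) (F : T → A.carrier → A.carrier) : Prop :=
  PolyGen A (prodGen (s.congruentMaps T) {id}) fun p => F p.1 p.2

theorem IsBinaryPoly.comp_polyGen {g : A.carrier → A.carrier → A.carrier}
    (hg : IsBinaryPoly A g) {f₁ f₂ : X → A.carrier} (h₁ : PolyGen A K f₁) (h₂ : PolyGen A K f₂) :
    PolyGen A K fun x => g (f₁ x) (f₂ x) :=
  hg.comp₂ f₁ f₂ (by rintro _ rfl; exact h₁) (by rintro _ rfl; exact h₂)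

theorem IsBinaryPoly.flip {g : A.carrier → A.carrier → A.carrier} (hg : IsBinaryPoly A g) :
    IsBinaryPoly A fun x y => g y x :=
  hg.comp_polyGen isUnaryPoly_id.snd isUnaryPoly_id.fst

theorem IsBinaryPoly.isTwinFamily {g : A.carrier → A.carrier → A.carrier} (hg : IsBinaryPoly A g)
    {k : T → A.carrier} (hk : k ∈ s.congruentMaps T) : IsTwinFamily s fun t => g (k t) :=
  hg.comp_polyGen (PolyGen.gen hk).fst isUnaryPoly_id.snd

theorem IsBinaryPoly.isUnaryPoly {g : A.carrier → A.carrier → A.carrier} (hg : IsBinaryPoly A g)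
    (a : A.carrier) : IsUnaryPoly A (g a) :=
  hg.comp_polyGen (.const a) isUnaryPoly_id

theorem IsBinaryPoly.iterate {g : A.carrier → A.carrier → A.carrier} (hg : IsBinaryPoly A g)
    (m : ℕ) : IsBinaryPoly A fun y => (g y)^[m] := by
  induction m with
  | zero => exact isUnaryPoly_id.snd
  | succ m ih => exact ih.comp_polyGen isUnaryPoly_id.fst hg

namespace IsTwinFamily

variable {F : T → A.carrier → A.carrier}

theorem comp_polyGen (hF : IsTwinFamily s F) {φ : X → T} {f : X → A.carrier}
    (hφ : ∀ k ∈ s.congruentMaps T, PolyGen A K fun x => k (φ x)) (hf : PolyGen A K f) :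
    PolyGen A K fun x => F (φ x) (f x) :=
  hF.comp₂ φ f hφ (by rintro _ rfl; exact hf)

theorem isUnaryPoly (hF : IsTwinFamily s F) (t : T) : IsUnaryPoly A (F t) :=
  hF.comp_polyGen (fun k _ => .const (k t)) isUnaryPoly_id

theorem reindex (hF : IsTwinFamily s F) (φ : S → T) : IsTwinFamily s fun t => F (φ t) :=
  hF.comp_polyGen
    (fun k hk => .gen (fst_mem_prodGen (k := fun t => k (φ t)) fun t t' => hk (φ t) (φ t')))
    isUnaryPoly_id.snd

theorem comp_unary (hF : IsTwinFamily s F) {h : A.carrier → A.carrier} (hh : IsUnaryPoly A h) :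
    IsTwinFamily s fun t x => F t (h x) :=
  hF.comp_polyGen (fun _ hk => .gen (fst_mem_prodGen hk)) hh.snd

theorem unary_comp {h : A.carrier → A.carrier} (hh : IsUnaryPoly A h) (hF : IsTwinFamily s F) :
    IsTwinFamily s fun t x => h (F t x) :=
  hh.comp_polyGen hF

theorem iterate (hF : IsTwinFamily s F) (m : ℕ) : IsTwinFamily s fun t => (F t)^[m] := by
  induction m with
  | zero => exact isUnaryPoly_id.snd
  | succ m ih => exact ih.comp_polyGen (fun _ hk => .gen (fst_mem_prodGen hk)) hF

theorem rel (hF : IsTwinFamily s F) (t t' : T) (x : A.carrier) : s.r (F t x) (F t' x) :=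
  PolyGen.rel (x := (t, x)) (y := (t', x)) hF s <| by
    rintro _ (⟨k, hk, rfl⟩ | ⟨_, rfl, rfl⟩)
    exacts [hk t t', s.refl x]

end IsTwinFamily

/-- One move from a function on `S` to another: the parameter `y` of a function `g (y, ·)` that is
polynomial in `y` and in the generators `G` is replaced by an `s`-congruent one. -/
def ParameterStep (s : Con A) (G : Set (S → A.carrier)) (φ ψ : S → A.carrier) : Prop :=
  ∃ g : A.carrier × S → A.carrier, PolyGen A (prodGen {id} G) g ∧
    ∃ y y', s.r y y' ∧ φ = (fun x => g (y, x)) ∧ ψ = fun x => g (y', x)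

theorem ParameterStep.interp {G : Set (S → A.carrier)} {o : σ.ops}
    {z : Fin (σ.arity o) → S → A.carrier} (hz : ∀ j, PolyGen A G (z j)) (i : Fin (σ.arity o))
    {φ ψ : S → A.carrier} (h : ParameterStep s G φ ψ) :
    ParameterStep s G (fun x => A.interp o fun j => Function.update z i φ j x)
      (fun x => A.interp o fun j => Function.update z i ψ j x) := by
  obtain ⟨g, hg, y, y', hy, rfl, rfl⟩ := h
  refine ⟨fun p => A.interp o fun j => Function.update (fun j p => z j p.2) i g j p,
    .app o _ fun j => ?_, y, y', hy, ?_, ?_⟩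
  · by_cases hj : j = i
    · subst hj; simpa using hg
    · simpa [hj] using (hz j).snd
  all_goals
    funext x
    congr 1
    funext j
    by_cases hj : j = i
    · subst hj; simp
    · simp [hj]

theorem reflTransGen_parameterStep {G : Set (S → A.carrier)} {f : T × S → A.carrier}
    (hf : PolyGen A (prodGen (s.congruentMaps T) G) f) (t t' : T) :
    Relation.ReflTransGen (ParameterStep s G) (fun x => f (t, x)) fun x => f (t', x) := by
  induction hf with
  | gen hf =>
    obtain ⟨k, hk, rfl⟩ | ⟨k, -, rfl⟩ := hf
    · exact
        .single ⟨fun p => p.1, .gen (fst_mem_prodGen (k := id) rfl), k t, k t', hk t t', rfl, rfl⟩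
    · exact .refl
  | const a => exact .refl
  | app o f hf ih =>
    have hsection : ∀ j t, PolyGen A G fun x => f j (t, x) := fun j t =>
      (hf j).comp₂ (fun _ => t) id (fun k _ => .const (k t)) fun _ hk => .gen hk
    refine rel_of_update (R := Relation.ReflTransGen (ParameterStep s G))
      (F := fun (z : Fin (σ.arity o) → S → A.carrier) x => A.interp o fun j => z j x)
      (x := fun j x => f j (t, x)) (y := fun j x => f j (t', x))
      (fun _ => .refl) .trans fun z hz i => ?_
    have hzG : ∀ j, PolyGen A G (z j) := fun j => by
      rcases hz j with h | h <;> rw [h] <;> exact hsection j _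
    exact (ih i).lift (fun φ x => A.interp o fun j => Function.update z i φ j x)
      fun _ _ => ParameterStep.interp hzG i

end TwinFamilies

section Matrices

variable {A : Algebra σ} {n : ℕ} {α α' : Fin n → Con A} {β β' δ s : Con A} {c d : A.carrier}

/-- The generators of the matrices of the term condition: cubes that depend on a single direction
`i`, in which their two entries are congruent modulo `θ i`. -/
def cubeGen (θ : Fin n → Con A) : Set ((Fin n → Bool) → A.carrier) :=
  {w | ∃ i, ∃ k ∈ (θ i).congruentMaps Bool, w = fun ε => k (ε i)}

theorem lastCases_const :
    Fin.lastCases (motive := fun _ => Con A) s (fun _ : Fin n => s) = fun _ => s :=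
  funext fun i => by cases i using Fin.lastCases <;> simp

theorem centralizes_iff_forall_polyGen [Finite A.carrier] :
    Centralizes α β δ ↔ ∀ f : (Fin (n + 1) → Bool) → A.carrier,
      PolyGen A (cubeGen (Fin.lastCases (motive := fun _ => Con A) β α)) f →
      (∀ ε : Fin n → Bool, ε ≠ (fun _ => true) →
        δ.r (f (Fin.lastCases (motive := fun _ => Bool) false ε))
          (f (Fin.lastCases (motive := fun _ => Bool) true ε))) →
      δ.r (f (Fin.lastCases (motive := fun _ => Bool) false fun _ => true))
        (f (Fin.lastCases (motive := fun _ => Bool) true fun _ => true)) := by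
  constructor
  · intro h f hf hδ
    obtain ⟨p, hp, hfp⟩ := hf.exists_isPolynomial
    choose g k hk hgk using fun i => ((Finite.equivFin
      (cubeGen (Fin.lastCases (motive := fun _ => Con A) β α))).symm i).2
    have hfp' : ∀ ε, f ε = p (chooseVec g (fun i => k i false) (fun i => k i true) ε) := fun ε => by
      rw [hfp]
      congr 1
      funext i
      rw [hgk]
      cases hε : ε (g i) <;> simp [chooseVec, hε]
    simp only [hfp'] at hδ ⊢
    exact h _ p hp g _ _ (fun i => hk i false true) hδ
  · intro h N p hp g a b hab
    refine h (fun ε => p (chooseVec g a b ε)) (hp.comp_polyGen fun i => .gen ?_)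
    exact ⟨g i, _, Con.cond_mem_congruentMaps (hab i), rfl⟩

theorem Centralizes.mono (h : Centralizes α β δ) (hα : ∀ i, α' i ≤ α i) (hβ : β' ≤ β) :
    Centralizes α' β' δ := by
  have hle : ∀ j : Fin (n + 1), Fin.lastCases (motive := fun _ => Con A) β' α' j ≤
      Fin.lastCases (motive := fun _ => Con A) β α j := fun j => by
    cases j using Fin.lastCases with
    | last => simpa using hβ
    | cast j => simpa using hα j
  exact fun N p hp g a b hab => h N p hp g a b fun i => hle (g i) _ _ (hab i)

theorem centralizes_commutator : Centralizes α β (commutator α β) :=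
  fun N p hp g a b hab hcube δ hδ => hδ N p hp g a b hab fun ε hε => hcube ε hε δ hδ

/-- The analogue of a 2-snag of Hobby and McKenzie for twin polynomials: on `{c, d}` one member of
a twin family is the identity and another one is constant with value `d`. -/
def IsTwinSnag (s : Con A) (c d : A.carrier) : Prop :=
  ∃ F : Bool → A.carrier → A.carrier, IsTwinFamily s F ∧
    F true c = c ∧ F true d = d ∧ F false c = d ∧ F false d = d

theorem IsTwinSnag.exists_polyGen_cube (h : IsTwinSnag s c d) (l : List (Fin n)) :
    ∃ f : (Fin (n + 1) → Bool) → A.carrier, PolyGen A (cubeGen fun _ => s) f ∧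
      ∀ ε, f ε = if (∀ i ∈ l, ε i.castSucc = true) ∧ ε (Fin.last n) = false then c else d := by
  obtain ⟨F, hF, hcc, hdd, hcd, hdd'⟩ := h
  induction l with
  | nil =>
    have hs : s.r c d := by simpa only [hcc, hcd] using hF.rel true false c
    exact ⟨_, .gen ⟨Fin.last n, _, Con.cond_mem_congruentMaps hs, rfl⟩, fun ε => by
      cases hε : ε (Fin.last n) <;> simp⟩
  | cons i l ih =>
    obtain ⟨f, hf, hfl⟩ := ih
    refine ⟨fun ε => F (ε i.castSucc) (f ε),
      hF.comp_polyGen (fun k hk => .gen ⟨i.castSucc, k, hk, rfl⟩) hf, fun ε => ?_⟩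
    simp only [hfl, List.forall_mem_cons]
    cases ε i.castSucc <;> split_ifs <;> simp_all

theorem IsTwinSnag.rel_of_centralizes [Finite A.carrier] (h : IsTwinSnag s c d)
    (hδ : Centralizes (fun _ : Fin n => s) s δ) : δ.r c d := by
  obtain ⟨f, hf, hfε⟩ := h.exists_polyGen_cube (List.finRange n)
  have hcube := centralizes_iff_forall_polyGen.mp hδ f (lastCases_const ▸ hf)
  simp only [hfε, List.mem_finRange, forall_const, Fin.lastCases_castSucc, Fin.lastCases_last,
    implies_true, and_true, and_false, if_true, if_false, Bool.true_eq_false] at hcube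
  refine hcube fun ε hε => ?_
  rw [if_neg fun h => hε (funext h)]
  exact δ.refl d

end Matrices

section Iterates

open Function Nat

variable {X : Type*}

theorem iterate_factorial_card_eq_apply_iterate_pred (h : X → X) (x : X) :
    h^[(Nat.card X)!] x = h (h^[(Nat.card X)! - 1] x) := by
  rw [← iterate_succ_apply' h, succ_eq_add_one, Nat.sub_add_cancel (Nat.factorial_pos _)]

theorem iterate_factorial_card_eq_iterate_pred_apply (h : X → X) (x : X) :
    h^[(Nat.card X)!] x = h^[(Nat.card X)! - 1] (h x) := by
  rw [← iterate_succ_apply h, succ_eq_add_one, Nat.sub_add_cancel (Nat.factorial_pos _)]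

variable [Finite X]

theorem isPeriodicPt_factorial_card (h : X → X) (x : X) :
    IsPeriodicPt h (Nat.card X)! (h^[(Nat.card X)!] x) := by
  have hcard : Nat.card X < Nat.card (Fin (Nat.card X + 1)) := by simp
  obtain ⟨i, j, hne, hij⟩ :
      ∃ i j : Fin (Nat.card X + 1), i ≠ j ∧ h^[i.1] x = h^[j.1] x := by
    by_contra! hinj
    exact hcard.not_ge (Nat.card_le_card_of_injective (fun i : Fin (Nat.card X + 1) => h^[i.1] x)
      fun i j hij => by_contra fun hne => hinj i j hne hij)
  wlog hlt : i < j generalizing i j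
  · exact this j i hne.symm hij.symm (lt_of_le_of_ne (not_lt.mp hlt) hne.symm)
  have hperiod : IsPeriodicPt h (j - i : ℕ) (h^[i.1] x) := by
    rw [IsPeriodicPt, IsFixedPt, ← iterate_add_apply, Nat.sub_add_cancel hlt.le, hij]
  have hi : i.1 ≤ (Nat.card X)! := (Nat.lt_succ_iff.mp i.2).trans (Nat.self_le_factorial _)
  have hdvd : (j - i : ℕ) ∣ (Nat.card X)! :=
    Nat.dvd_factorial (Nat.sub_pos_of_lt hlt) ((Nat.sub_le _ _).trans (Nat.lt_succ_iff.mp j.2))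
  rw [← Nat.sub_add_cancel hi, iterate_add_apply, Nat.sub_add_cancel hi]
  exact (hperiod.apply_iterate _).trans_dvd hdvd

theorem iterate_factorial_card_of_bijOn {h : X → X} {U : Set X} (hh : Set.BijOn h U U) {x : X}
    (hx : x ∈ U) : h^[(Nat.card X)!] x = x :=
  (hh.iterate _).injOn ((hh.iterate _).mapsTo hx) hx (isPeriodicPt_factorial_card h x)

theorem iterate_factorial_card_pred_of_bijOn {h : X → X} {U : Set X} (hh : Set.BijOn h U U)
    {x : X} (hx : x ∈ U) : h^[(Nat.card X)! - 1] (h x) = x := by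
  rw [← iterate_factorial_card_eq_iterate_pred_apply, iterate_factorial_card_of_bijOn hh hx]

theorem bijOn_of_image_eq {h : X → X} {U : Set X} (hh : h '' U = U) : Set.BijOn h U U := by
  have hinj : Set.InjOn h U := Set.injOn_of_ncard_image_eq (by rw [hh])
  simpa only [hh] using hinj.bijOn_image

end Iterates

section Covers

variable {A : Algebra σ} {γ s : Con A} {u v : A.carrier}

/-- An equivalence relation preserved by all unary polynomials is a congruence. -/
def Con.ofUnaryInvariant (E : A.carrier → A.carrier → Prop) (hE : Equivalence E)
    (hinv : ∀ h, IsUnaryPoly A h → ∀ x y, E x y → E (h x) (h y)) : Con A where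
  r := E
  refl := hE.refl
  symm := hE.symm
  trans := hE.trans
  compat o x y hxy := by
    refine rel_of_update hE.refl hE.trans fun z _ i => ?_
    refine hinv (fun w => A.interp o (Function.update z i w)) (.app o _ fun j => ?_) _ _ (hxy i)
    by_cases hj : j = i
    · subst hj; simpa only [Function.update_self] using .gen rfl
    · simpa [hj] using PolyGen.const (z j)

theorem Con.Covers.le_of_unaryInvariant (hcov : Con.Covers γ s)
    {E : A.carrier → A.carrier → Prop} (hE : Equivalence E)
    (hinv : ∀ h, IsUnaryPoly A h → ∀ x y, E x y → E (h x) (h y))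
    (hγE : ∀ x y, γ.r x y → E x y) (huv : s.r u v) (hγ : ¬ γ.r u v) (hEuv : E u v)
    {x y : A.carrier} (hxy : s.r x y) : E x y := by
  have hlt : γ < (Con.ofUnaryInvariant E hE hinv).inf s :=
    ⟨fun a b h => ⟨hγE a b h, hcov.1.1 a b h⟩, fun h => hγ (h u v ⟨hEuv, huv⟩)⟩
  have heq := hcov.2 _ hlt fun _ _ h => h.2
  rw [← heq] at hxy
  exact hxy.1

end Covers

section MinimalSets

variable {A : Algebra σ} {γ s : Con A} {U : Set A.carrier} {h : A.carrier → A.carrier}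

/-- `⟨γ, s⟩`-minimal sets of tame congruence theory: the minimal ranges of unary polynomials that
do not collapse `s` into `γ`. -/
def IsMinimalSet (γ s : Con A) (U : Set A.carrier) : Prop :=
  Minimal (fun V => ∃ f, IsUnaryPoly A f ∧ (∃ x y, s.r x y ∧ ¬ γ.r (f x) (f y)) ∧
    Set.range f = V) U

theorem exists_isMinimalSet [Finite A.carrier] (hs : ¬ s ≤ γ) : ∃ U, IsMinimalSet γ s U := by
  refine exists_minimal_of_wellFoundedLT _ ⟨_, fun x => x, isUnaryPoly_id, ?_, rfl⟩
  by_contra! hγ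
  exact hs hγ

namespace IsMinimalSet

theorem exists_mem_not_rel (hU : IsMinimalSet γ s U) :
    ∃ u ∈ U, ∃ v ∈ U, s.r u v ∧ ¬ γ.r u v := by
  obtain ⟨f, hf, ⟨x, y, hxy, hγ⟩, rfl⟩ := hU.prop
  exact ⟨f x, ⟨x, rfl⟩, f y, ⟨y, rfl⟩, hf.rel s hxy, hγ⟩

theorem range_eq (hU : IsMinimalSet γ s U) (hh : IsUnaryPoly A h) (hhU : ∀ x, h x ∈ U)
    {x y : A.carrier} (hxy : s.r x y) (hγ : ¬ γ.r (h x) (h y)) : Set.range h = U :=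
  hU.eq_of_subset ⟨h, hh, ⟨x, y, hxy, hγ⟩, rfl⟩ (Set.range_subset_iff.mpr hhU)

theorem exists_separating (hU : IsMinimalSet γ s U) (hcov : Con.Covers γ s) {x y : A.carrier}
    (hxy : s.r x y) (hγ : ¬ γ.r x y) :
    ∃ q, IsUnaryPoly A q ∧ (∀ z, q z ∈ U) ∧ ¬ γ.r (q x) (q y) := by
  obtain ⟨f, hf, ⟨a, b, hab, hγab⟩, rfl⟩ := hU.prop
  by_contra! hcollapse
  refine hγab (hcov.le_of_unaryInvariant
    (E := fun x y => ∀ q, IsUnaryPoly A q → γ.r (f (q x)) (f (q y)))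
    ⟨fun _ _ _ => γ.refl _, fun h q hq => γ.symm (h q hq),
      fun h h' q hq => γ.trans (h q hq) (h' q hq)⟩
    (fun p hp _ _ hE q hq => hE _ (hq.comp_polyGen hp))
    (fun _ _ h q hq => hf.rel γ (hq.rel γ h)) hxy hγ
    (fun q hq => hcollapse _ (hf.comp_polyGen hq) fun z => ⟨q z, rfl⟩) hab _ isUnaryPoly_id)

variable [Finite A.carrier]

theorem exists_retraction (hU : IsMinimalSet γ s U) (hcov : Con.Covers γ s) :
    ∃ e, IsUnaryPoly A e ∧ (∀ z, e z ∈ U) ∧ ∀ x ∈ U, e x = x := by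
  obtain ⟨f, hf, ⟨a, b, hab, hγab⟩, hrange⟩ := hU.prop
  obtain ⟨q, hq, hqU, hγq⟩ := hU.exists_separating hcov (hf.rel s hab) hγab
  have himage : q '' U = U := by
    rw [← hrange, ← Set.range_comp, hrange]
    exact hU.range_eq (hq.comp_polyGen hf) (fun x => hqU (f x)) hab hγq
  refine ⟨q^[(Nat.card A.carrier).factorial], hq.iterate _, fun z => ?_,
    fun x => iterate_factorial_card_of_bijOn (bijOn_of_image_eq himage)⟩
  rw [iterate_factorial_card_eq_apply_iterate_pred]
  exact hqU _

theorem bijOn (hU : IsMinimalSet γ s U) (hcov : Con.Covers γ s) (hh : IsUnaryPoly A h)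
    (hhU : ∀ x, h x ∈ U) {x y : A.carrier} (hx : x ∈ U) (hy : y ∈ U) (hxy : s.r x y)
    (hγ : ¬ γ.r (h x) (h y)) : Set.BijOn h U U := by
  obtain ⟨e, he, heU, heid⟩ := hU.exists_retraction hcov
  have hrange : Set.range e = U :=
    (Set.range_subset_iff.mpr heU).antisymm fun z hz => ⟨z, heid z hz⟩
  refine bijOn_of_image_eq ?_
  rw [← hrange, ← Set.range_comp, hrange]
  refine hU.range_eq (hh.comp_polyGen he) (fun z => hhU (e z)) hxy ?_
  simpa only [Function.comp_apply, heid x hx, heid y hy] using hγ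

end IsMinimalSet

theorem IsUnaryPoly.rel_of_bijOn [Finite A.carrier] (hh : IsUnaryPoly A h)
    (hbij : Set.BijOn h U U) {x y : A.carrier} (hx : x ∈ U) (hy : y ∈ U)
    (hγ : γ.r (h x) (h y)) : γ.r x y := by
  simpa only [iterate_factorial_card_pred_of_bijOn hbij hx,
    iterate_factorial_card_pred_of_bijOn hbij hy] using
    (hh.iterate ((Nat.card A.carrier).factorial - 1)).rel γ hγ

end MinimalSets

section SnagFreeCovers

variable {A : Algebra σ} [Finite A.carrier] {γ s : Con A} {U : Set A.carrier} {T : Type}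
  {F : T → A.carrier → A.carrier}

namespace IsMinimalSet

/-- If `F t'` collapsed `u` and `v` into `γ`, then for a suitable `N` the iterates `F t ^ N = id`
and `F t' ^ N` would form twin snags at `u` and at `v`, making `u` and `v` congruent modulo `γ` to
their images under `F t' ^ N`, hence to each other. -/
theorem bijOn_of_twin (hU : IsMinimalSet γ s U) (hcov : Con.Covers γ s)
    (hsnag : ∀ c d, IsTwinSnag s c d → γ.r c d) (hF : IsTwinFamily s F) (hFU : ∀ t x, F t x ∈ U)
    {t : T} (ht : Set.BijOn (F t) U U) (t' : T) : Set.BijOn (F t') U U := by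
  obtain ⟨u, hu, v, hv, huv, hγ⟩ := hU.exists_mem_not_rel
  refine hU.bijOn hcov (hF.isUnaryPoly t') (hFU t') hu hv huv fun hcollapse => hγ ?_
  set N := (Nat.card A.carrier).factorial
  have hiterate : ∀ c ∈ U, γ.r c ((F t')^[N] c) := fun c hc => by
    refine hsnag _ _ ⟨fun b => (F (if b then t else t'))^[N], (hF.iterate N).reindex _,
      iterate_factorial_card_of_bijOn ht hc, iterate_factorial_card_of_bijOn ht ?_, rfl,
      isPeriodicPt_factorial_card (F t') c⟩
    rw [iterate_factorial_card_eq_apply_iterate_pred]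
    exact hFU _ _
  refine γ.trans (hiterate u hu) (γ.trans ?_ (γ.symm (hiterate v hv)))
  rw [iterate_factorial_card_eq_iterate_pred_apply, iterate_factorial_card_eq_iterate_pred_apply]
  exact ((hF.isUnaryPoly t').iterate _).rel γ hcollapse

theorem bijOn_of_binary (hU : IsMinimalSet γ s U) (hcov : Con.Covers γ s)
    (hsnag : ∀ c d, IsTwinSnag s c d → γ.r c d) {g : A.carrier → A.carrier → A.carrier}
    (hg : IsBinaryPoly A g) (hgU : ∀ y x, g y x ∈ U) {y y' : A.carrier} (hy : s.r y y')
    (hgy : Set.BijOn (g y) U U) : Set.BijOn (g y') U U :=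
  hU.bijOn_of_twin hcov hsnag (hg.isTwinFamily (Con.cond_mem_congruentMaps hy))
    (fun _ => hgU _) (t := false) hgy true

theorem rel_binary_of_forall (hU : IsMinimalSet γ s U) (hcov : Con.Covers γ s)
    (hsnag : ∀ c d, IsTwinSnag s c d → γ.r c d) {u v w : A.carrier} (huv : s.r u v)
    (hγ : ¬ γ.r u v)
    (hrel : ∀ g, IsBinaryPoly A g → (∀ y x, g y x ∈ U) → Set.BijOn (g u) U U →
      γ.r (g u w) (g v w))
    {g : A.carrier → A.carrier → A.carrier} (hg : IsBinaryPoly A g) (hgU : ∀ y x, g y x ∈ U)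
    {y y' : A.carrier} (hy : s.r y y') (hgy : Set.BijOn (g y) U U) : γ.r (g y w) (g y' w) := by
  refine (hcov.le_of_unaryInvariant
    (E := fun y y' => s.r y y' ∧ ∀ g, IsBinaryPoly A g → (∀ y x, g y x ∈ U) →
      Set.BijOn (g y) U U → γ.r (g y w) (g y' w))
    ⟨fun y => ⟨s.refl y, fun _ _ _ _ => γ.refl _⟩, fun h => ⟨s.symm h.1, ?_⟩,
      fun h h' => ⟨s.trans h.1 h'.1, ?_⟩⟩ ?_ ?_ huv hγ ⟨huv, hrel⟩ hy).2 g hg hgU hgy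
  · intro g hg hgU hgy
    exact γ.symm (h.2 g hg hgU (hU.bijOn_of_binary hcov hsnag hg hgU (s.symm h.1) hgy))
  · intro g hg hgU hgy
    exact γ.trans (h.2 g hg hgU hgy)
      (h'.2 g hg hgU (hU.bijOn_of_binary hcov hsnag hg hgU h.1 hgy))
  · exact fun p hp y y' h => ⟨hp.rel s h.1, fun g hg hgU =>
      h.2 (fun y => g (p y)) (hg.comp_polyGen hp.fst isUnaryPoly_id.snd) fun y => hgU (p y)⟩
  · exact fun y y' h => ⟨hcov.1.1 y y' h, fun g hg _ _ => (hg.flip.isUnaryPoly w).rel γ h⟩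

theorem exists_binary_not_rel (hU : IsMinimalSet γ s U) (hcov : Con.Covers γ s)
    (hsnag : ∀ c d, IsTwinSnag s c d → γ.r c d) (hF : IsTwinFamily s F) (hFU : ∀ t x, F t x ∈ U)
    {t t' : T} (ht : Set.BijOn (F t) U U) {w : A.carrier} (hw : ¬ γ.r (F t w) (F t' w))
    {u v : A.carrier} (huv : s.r u v) (hγ : ¬ γ.r u v) :
    ∃ g, IsBinaryPoly A g ∧ (∀ y x, g y x ∈ U) ∧ Set.BijOn (g u) U U ∧ ¬ γ.r (g u w) (g v w) := by
  by_contra! hrel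
  obtain ⟨e, he, heU, heid⟩ := hU.exists_retraction hcov
  have hchain : ∀ ψ, Relation.ReflTransGen (ParameterStep s {id}) (F t) ψ →
      Set.BijOn (fun x => e (ψ x)) U U ∧ γ.r (e (F t w)) (e (ψ w)) := fun ψ hψ => by
    induction hψ with
    | refl => exact ⟨ht.congr fun x _ => (heid _ (hFU t x)).symm, γ.refl _⟩
    | tail _ hstep ih =>
      obtain ⟨g, hg, y, y', hy, rfl, rfl⟩ := hstep
      have hge : IsBinaryPoly A fun y x => e (g (y, x)) := he.comp_polyGen hg
      exact ⟨hU.bijOn_of_binary hcov hsnag hge (fun _ _ => heU _) hy ih.1, γ.trans ih.2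
        (hU.rel_binary_of_forall hcov hsnag huv hγ hrel hge (fun _ _ => heU _) hy ih.1)⟩
  have hF' := (hchain _ (reflTransGen_parameterStep hF t t')).2
  rw [heid _ (hFU t w), heid _ (hFU t' w)] at hF'
  exact hw hF'

/-- With `o = g u w` and `ρ y` the solution of `g y (ρ y) = o`, obtained by iterating `g y`, the
polynomial `g x (ρ y)` is a subtraction `x - y` with zero `o`. -/
theorem exists_subtraction (hU : IsMinimalSet γ s U) (hcov : Con.Covers γ s)
    (hsnag : ∀ c d, IsTwinSnag s c d → γ.r c d) {g : A.carrier → A.carrier → A.carrier}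
    (hg : IsBinaryPoly A g) (hgU : ∀ y x, g y x ∈ U) {u v w : A.carrier} (hu : u ∈ U) (hv : v ∈ U)
    (hw : w ∈ U) (huv : s.r u v) (hgu : Set.BijOn (g u) U U) (hγ : ¬ γ.r (g u w) (g v w)) :
    ∃ d o, IsBinaryPoly A d ∧ (∀ x y, d x y ∈ U) ∧
      ∀ y, s.r u y → d y y = o ∧ Set.BijOn (fun x => d x y) U U := by
  let ρ : A.carrier → A.carrier := fun y => (g y)^[(Nat.card A.carrier).factorial - 1] (g u w)
  have hρ : IsUnaryPoly A ρ := (hg.iterate _).comp_polyGen isUnaryPoly_id (.const (g u w))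
  have hρu : ρ u = w := iterate_factorial_card_pred_of_bijOn hgu hw
  refine ⟨fun x y => g x (ρ y), g u w, hg.comp_polyGen isUnaryPoly_id.fst hρ.snd,
    fun _ _ => hgU _ _, fun y hy => ⟨?_, ?_⟩⟩
  · have hgy : Set.BijOn (g y) U U := hU.bijOn_of_binary hcov hsnag hg hgU hy hgu
    exact (iterate_factorial_card_eq_apply_iterate_pred (g y) (g u w)).symm.trans
      (iterate_factorial_card_of_bijOn hgy (hgU u w))
  · have hgw : Set.BijOn (fun x => g x w) U U :=
      hU.bijOn hcov (hg.flip.isUnaryPoly w) (fun _ => hgU _ _) hu hv huv hγ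
    exact hU.bijOn_of_binary hcov hsnag hg.flip (fun _ _ => hgU _ _)
      (by simpa only [hρu] using hρ.rel s hy) hgw

theorem rel_twin_of_bijOn (hU : IsMinimalSet γ s U) (hcov : Con.Covers γ s)
    (hsnag : ∀ c d, IsTwinSnag s c d → γ.r c d) (hF : IsTwinFamily s F) (hFU : ∀ t x, F t x ∈ U)
    {t t' : T} {u v : A.carrier} (hu : u ∈ U) (hv : v ∈ U) (huv : s.r u v) (hγ : ¬ γ.r u v)
    (ht : Set.BijOn (F t) U U) (hFu : γ.r (F t u) (F t' u)) : γ.r (F t v) (F t' v) := by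
  by_contra hFv
  have hFtuv : ¬ γ.r (F t u) (F t v) := fun h => hγ ((hF.isUnaryPoly t).rel_of_bijOn ht hu hv h)
  have hsFtuv : s.r (F t u) (F t v) := (hF.isUnaryPoly t).rel s huv
  obtain ⟨g, hg, hgU, hgu, hgγ⟩ :=
    hU.exists_binary_not_rel hcov hsnag hF hFU ht hFv hsFtuv hFtuv
  obtain ⟨d, o, hd, hdU, hdo⟩ :=
    hU.exists_subtraction hcov hsnag hg hgU (hFU t u) (hFU t v) hv hsFtuv hgu hgγ
  have hdFu := hdo _ (s.refl (F t u))
  have hdFv := hdo _ hsFtuv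
  let D : T → A.carrier → A.carrier := fun τ x => d (F τ x) (F t x)
  have hD : IsTwinFamily s D := hd.comp_polyGen hF (hF.isUnaryPoly t).snd
  have hDu : γ.r (D t' u) o := by
    simpa only [D, hdFu.1] using γ.symm ((hd.flip.isUnaryPoly (F t u)).rel γ hFu)
  have hDv : ¬ γ.r (D t' v) o := fun h => by
    rw [← hdFv.1] at h
    exact hFv (γ.symm ((hd.flip.isUnaryPoly (F t v)).rel_of_bijOn hdFv.2 (hFU t' v) (hFU t v) h))
  have hDt' : Set.BijOn (D t') U U :=
    hU.bijOn hcov (hD.isUnaryPoly t') (fun _ => hdU _ _) hu hv huv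
      fun h => hDv (γ.trans (γ.symm h) hDu)
  have hDt : Set.BijOn (D t) U U :=
    hU.bijOn_of_twin hcov hsnag hD (fun _ _ => hdU _ _) hDt' t
  have hDuv : D t u = D t v := hdFu.1.trans hdFv.1.symm
  exact hγ (hDt.injOn hu hv hDuv ▸ γ.refl u)

theorem rel_twin_of_mem (hU : IsMinimalSet γ s U) (hcov : Con.Covers γ s)
    (hsnag : ∀ c d, IsTwinSnag s c d → γ.r c d) (hF : IsTwinFamily s F) {t t' : T}
    {u v : A.carrier} (hu : u ∈ U) (hv : v ∈ U) (huv : s.r u v) (hγ : ¬ γ.r u v)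
    (hFu : γ.r (F t u) (F t' u)) : γ.r (F t v) (F t' v) := by
  by_contra hFv
  obtain ⟨q, hq, hqU, hqγ⟩ := hU.exists_separating hcov (hF.rel t t' v) hFv
  have hqF : IsTwinFamily s fun t x => q (F t x) := .unary_comp hq hF
  refine hqγ (hU.rel_twin_of_bijOn hcov hsnag hqF (fun _ _ => hqU _) hu hv huv hγ ?_
    (hq.rel γ hFu))
  by_contra hnot
  have hcollapse : ∀ τ, γ.r (q (F τ u)) (q (F τ v)) := fun τ => by
    by_contra hτ
    exact hnot <| hU.bijOn_of_twin hcov hsnag hqF (fun _ _ => hqU _)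
      (hU.bijOn hcov (hqF.isUnaryPoly τ) (fun _ => hqU _) hu hv huv hτ) t
  exact hqγ (γ.trans (γ.symm (hcollapse t)) (γ.trans (hq.rel γ hFu) (hcollapse t')))

end IsMinimalSet

theorem IsTwinFamily.rel_of_rel (hF : IsTwinFamily s F) (hcov : Con.Covers γ s)
    (hsnag : ∀ c d, IsTwinSnag s c d → γ.r c d) {t t' : T} {x y : A.carrier} (hxy : s.r x y)
    (hFx : γ.r (F t x) (F t' x)) : γ.r (F t y) (F t' y) := by
  obtain ⟨U, hU⟩ := exists_isMinimalSet hcov.1.2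
  obtain ⟨u, hu, v, hv, huv, hγ⟩ := hU.exists_mem_not_rel
  have hE := hcov.le_of_unaryInvariant (u := u) (v := v)
    (E := fun x y => ∀ F : Bool → A.carrier → A.carrier, IsTwinFamily s F →
      (γ.r (F false x) (F true x) ↔ γ.r (F false y) (F true y)))
    ⟨fun _ _ _ => Iff.rfl, fun h F hF => (h F hF).symm,
      fun h h' F hF => (h F hF).trans (h' F hF)⟩
    (fun p hp x y h F hF => h (fun b x => F b (p x)) (hF.comp_unary hp))
    (fun x y h F hF =>
      have hFxy b := (hF.isUnaryPoly b).rel γ h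
      ⟨fun hx => γ.trans (γ.symm (hFxy false)) (γ.trans hx (hFxy true)),
        fun hy => γ.trans (hFxy false) (γ.trans hy (γ.symm (hFxy true)))⟩)
    huv hγ (fun F hF => ⟨hU.rel_twin_of_mem hcov hsnag hF hu hv huv hγ,
      hU.rel_twin_of_mem hcov hsnag hF hv hu (s.symm huv) fun h => hγ (γ.symm h)⟩) hxy
  exact (hE (fun b => F (if b then t' else t)) (hF.reindex _)).mp hFx

theorem Con.Covers.centralizes_of_forall_isTwinSnag (hcov : Con.Covers γ s)
    (hsnag : ∀ c d, IsTwinSnag s c d → γ.r c d) : Centralizes (fun _ : Fin 1 => s) s γ := by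
  refine centralizes_iff_forall_polyGen.mpr fun f hf hrel => ?_
  rw [lastCases_const] at hf
  let M : Bool × Bool → A.carrier := fun p =>
    f (Fin.lastCases (motive := fun _ => Bool) p.2 fun _ => p.1)
  have hM : PolyGen A (prodGen (s.congruentMaps Bool) (s.congruentMaps Bool)) M := by
    refine hf.comp _ ?_
    rintro _ ⟨i, k, hk, rfl⟩
    cases i using Fin.lastCases with
    | last => simpa only [Fin.lastCases_last] using PolyGen.gen (snd_mem_prodGen hk)
    | cast i => simpa only [Fin.lastCases_castSucc] using PolyGen.gen (fst_mem_prodGen hk)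
  have hchain : ∀ ψ, Relation.ReflTransGen (ParameterStep s (s.congruentMaps Bool))
      (fun b => M (false, b)) ψ → γ.r (ψ false) (ψ true) := fun ψ hψ => by
    induction hψ with
    | refl => exact hrel (fun _ => false) fun h => Bool.false_ne_true (congrFun h 0)
    | tail _ hstep ih =>
      obtain ⟨g, hg, y, y', hy, rfl, rfl⟩ := hstep
      have hgF : IsTwinFamily s fun b x => g (x, b) :=
        hg.comp₂ Prod.snd Prod.fst (fun _ hk => .gen (snd_mem_prodGen hk))
          fun _ hk => .gen (fst_mem_prodGen hk)
      exact hgF.rel_of_rel hcov hsnag hy ih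
  exact hchain _ (reflTransGen_parameterStep hM false true)

end SnagFreeCovers

/-- Proposition 4.3 of "On Supernilpotent Algebras": in a finite algebra, every
cover inside an `n`-supernilpotent interval of the congruence lattice is abelian. -/
theorem finite_supernilpotent_interval_covers_abelian {σ : Signature} (A : Algebra σ)
    (hfin : Finite A.carrier) (n : ℕ) (hn : 2 ≤ n)
    (α β : Con A) (hab : α ≤ β) (hsn : nfold β n ≤ α) :
    ∀ γ s : Con A, α ≤ γ → Con.Covers γ s → s ≤ β →
      Centralizes (fun _ : Fin 1 => s) s γ := by
  intro γ s hαγ hcov hsβ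
  obtain ⟨m, rfl⟩ := Nat.exists_eq_add_of_le' hn
  have hcomm : commutator (fun _ : Fin (m + 1) => β) β ≤ α := hsn
  have hcentral : Centralizes (fun _ : Fin (m + 1) => s) s (commutator (fun _ => β) β) :=
    centralizes_commutator.mono (fun _ => hsβ) hsβ
  refine hcov.centralizes_of_forall_isTwinSnag fun c d hcd => hαγ _ _ (hcomm _ _ ?_)
  exact hcd.rel_of_centralizes hcentral

end UA
end
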